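/- arXiv:2206.03204 — 3 statements merged into one kernel-verified Lean document; each statement's English description precedes it below -/
import Mathlib

section
/- Let p_1, …, p_n be vectors in ℝ^d (d ≥ 1) and let Z = Σ_{i=1}^n [0, p_i] be the zonotope they generate. Then the d-dimensional Lebesgue volume of Z equals the sum over all d-element index sets 1 ≤ i_1 < i_2 < … < i_d ≤ n of |det[p_{i_1}, p_{i_2}, …, p_{i_d}]|, the absolute value of the determinant of the d×d matrix with these columns. -/
open scoped Pointwise
open MeasureTheory

/-- Thickening a compact convex set by a unit segment along the first factor increases its volume
by the measure of its projection to the second factor. -/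
theorem measure_prod_add_segment {E : Type*} [AddCommGroup E] [Module ℝ E] [TopologicalSpace E]
    [T2Space E] [MeasurableSpace E] [BorelSpace E] [SecondCountableTopology E] [ContinuousAdd E]
    (μ : Measure E) [SFinite μ] {K : Set (ℝ × E)} (hK : IsCompact K) (hconv : Convex ℝ K) :
    (volume.prod μ) (segment ℝ 0 ((1 : ℝ), (0 : E)) + K) =
      (volume.prod μ) K + μ (Prod.snd '' K) := by
  have hseg : IsCompact (segment ℝ 0 ((1 : ℝ), (0 : E))) := by
    have : segment ℝ 0 ((1 : ℝ), (0 : E)) = (fun t : ℝ => (t, (0 : E))) '' Set.Icc 0 1 := by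
      rw [segment_eq_image]; simp
    rw [this]
    exact isCompact_Icc.image (by fun_prop)
  have hmeas : MeasurableSet (Prod.snd '' K) := (hK.image continuous_snd).isClosed.measurableSet
  rw [Measure.prod_apply_symm (hseg.add hK).isClosed.measurableSet,
    Measure.prod_apply_symm hK.isClosed.measurableSet, ← lintegral_indicator_one hmeas,
    ← lintegral_add_right _ (measurable_one.indicator hmeas)]
  congr 1 with y
  have hslice : (fun x : ℝ => (x, y)) ⁻¹' (segment ℝ 0 ((1 : ℝ), (0 : E)) + K) =
      Set.Icc 0 1 + (fun x : ℝ => (x, y)) ⁻¹' K := by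
    ext x
    simp [segment_eq_image, Set.mem_add]
  rw [hslice]
  by_cases hy : y ∈ Prod.snd '' K
  · have hcomp : IsCompact ((fun x : ℝ => (x, y)) ⁻¹' K) := by
      have := (hK.inter_right (isClosed_singleton.preimage continuous_snd :
        IsClosed (Prod.snd ⁻¹' {y} : Set (ℝ × E)))).image continuous_fst
      convert this
      ext x
      simp
    have hcv : Convex ℝ ((fun x : ℝ => (x, y)) ⁻¹' K) := by
      intro a ha b hb s t hs ht hst
      have := hconv ha hb hs ht hst
      simpa [← add_smul, hst] using this
    have hne : ((fun x : ℝ => (x, y)) ⁻¹' K).Nonempty := by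
      obtain ⟨⟨x, _⟩, hx, rfl⟩ := hy
      exact ⟨x, hx⟩
    have hIcc := eq_Icc_of_connected_compact ⟨hne, hcv.isPreconnected⟩ hcomp
    have hle : sInf ((fun x : ℝ => (x, y)) ⁻¹' K) ≤ sSup ((fun x : ℝ => (x, y)) ⁻¹' K) :=
      Real.sInf_le_sSup _ hcomp.bddBelow hcomp.bddAbove
    generalize sInf ((fun x : ℝ => (x, y)) ⁻¹' K) = a at *
    generalize sSup ((fun x : ℝ => (x, y)) ⁻¹' K) = b at *
    rw [hIcc, Set.Icc_add_Icc zero_le_one hle, Set.indicator_of_mem hy, Real.volume_Icc,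
      Real.volume_Icc, Pi.one_apply, ← ENNReal.ofReal_one, ← ENNReal.ofReal_add (by linarith)
      zero_le_one]
    congr 1
    ring
  · have hempty : (fun x : ℝ => (x, y)) ⁻¹' K = ∅ := by
      ext x
      simpa using fun h => hy ⟨(x, y), h, rfl⟩
    simp [hempty, hy]

/-- The absolute value of the determinant whose columns are the vectors indexed by the elements
of `S` in increasing order, and `0` if `S` does not have the right number of elements. -/
noncomputable def absMinor {d n : ℕ} (p : Fin n → Fin d → ℝ) (S : Finset (Fin n)) : ℝ :=
  if h : S.card = d then |(Matrix.of fun i j : Fin d => p (S.orderEmbOfFin h j) i).det| else 0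

theorem absMinor_linearMap {d n : ℕ} (f : (Fin d → ℝ) →ₗ[ℝ] Fin d → ℝ) (p : Fin n → Fin d → ℝ)
    (S : Finset (Fin n)) :
    absMinor (fun i => f (p i)) S = |LinearMap.det f| * absMinor p S := by
  unfold absMinor
  split_ifs with h
  · rw [← LinearMap.det_toMatrix', ← abs_mul, ← Matrix.det_mul]
    congr 2
    ext i j
    exact (congrFun (LinearMap.toMatrix'_mulVec f (p (S.orderEmbOfFin h j))) i).symm
  · simp

theorem absMinor_map_succ {d n : ℕ} (p : Fin (n + 1) → Fin d → ℝ) (S : Finset (Fin n)) :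
    absMinor p (S.map (Fin.succEmb n)) = absMinor (fun i => p i.succ) S := by
  unfold absMinor
  by_cases h : S.card = d
  · rw [dif_pos h, dif_pos (by simpa using h)]
    congr 3
    ext i j
    have : (fun k => (S.orderEmbOfFin h k).succ) =
        (S.map (Fin.succEmb n)).orderEmbOfFin (by simpa using h) :=
      Finset.orderEmbOfFin_unique _ (by simp)
        ((Fin.strictMono_succ).comp (S.orderEmbOfFin h).strictMono)
    rw [← this]
  · rw [dif_neg h, dif_neg (by simpa using h)]

theorem absMinor_insert_zero {d n : ℕ} (p : Fin (n + 1) → Fin (d + 1) → ℝ) {S : Finset (Fin n)}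
    (h : S.card = d) :
    absMinor p (insert 0 (S.map (Fin.succEmb n))) =
      |(Matrix.of fun i j => (Fin.cons (p 0) (fun k => p (S.orderEmbOfFin h k).succ) :
        Fin (d + 1) → Fin (d + 1) → ℝ) j i).det| := by
  have hc : (insert 0 (S.map (Fin.succEmb n))).card = d + 1 := by
    rw [Finset.card_insert_of_notMem (by simp), Finset.card_map, h]
  rw [absMinor, dif_pos hc]
  have : Fin.cons 0 (fun k => (S.orderEmbOfFin h k).succ) =
      (insert 0 (S.map (Fin.succEmb n))).orderEmbOfFin hc := by
    apply Finset.orderEmbOfFin_unique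
    · intro x
      cases x using Fin.cases <;> simp
    · intro x y hxy
      cases y using Fin.cases with
      | zero => simp at hxy
      | succ y =>
        cases x using Fin.cases with
        | zero => simp
        | succ x => simpa using hxy
  rw [← this]
  congr 3
  ext i j
  cases j using Fin.cases <;> simp

theorem absMinor_insert_zero_of_eq_zero {d n : ℕ} {p : Fin (n + 1) → Fin (d + 1) → ℝ}
    (hp : p 0 = 0) {S : Finset (Fin n)} (h : S.card = d) :
    absMinor p (insert 0 (S.map (Fin.succEmb n))) = 0 := by
  rw [absMinor_insert_zero p h, abs_eq_zero]
  exact Matrix.det_eq_zero_of_column_eq_zero 0 fun i => by simp [hp]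

theorem absMinor_insert_zero_of_eq_single {d n : ℕ} {p : Fin (n + 1) → Fin (d + 1) → ℝ}
    (hp : p 0 = Pi.single 0 1) {S : Finset (Fin n)} (h : S.card = d) :
    absMinor p (insert 0 (S.map (Fin.succEmb n))) =
      absMinor (fun i => Fin.tail (p i.succ)) S := by
  rw [absMinor_insert_zero p h, absMinor, dif_pos h, Matrix.det_succ_column_zero,
    Fin.sum_univ_succ]
  simp [hp, Matrix.submatrix, Fin.tail]

theorem sum_powersetCard_fin_succ {M : Type*} [AddCommMonoid M] (d n : ℕ)
    (f : Finset (Fin (n + 1)) → M) :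
    ∑ S ∈ (Finset.univ : Finset (Fin (n + 1))).powersetCard (d + 1), f S =
      ∑ S ∈ (Finset.univ : Finset (Fin n)).powersetCard (d + 1), f (S.map (Fin.succEmb n)) +
      ∑ S ∈ (Finset.univ : Finset (Fin n)).powersetCard d,
        f (insert 0 (S.map (Fin.succEmb n))) := by
  have hnot : ∀ S : Finset (Fin n), (0 : Fin (n + 1)) ∉ S.map (Fin.succEmb n) := by simp
  have huniv : (Finset.univ : Finset (Fin (n + 1))) =
      insert 0 (Finset.univ.map (Fin.succEmb n)) := by
    ext x
    cases x using Fin.cases <;> simp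
  rw [huniv, Finset.powersetCard_succ_insert (hnot _), Finset.sum_union]
  · rw [Finset.powersetCard_map, Finset.powersetCard_map, Finset.sum_map, Finset.sum_image,
      Finset.sum_map]
    · rfl
    · intro S hS T hT h
      simp only [Finset.coe_map, Set.mem_image] at hS hT
      obtain ⟨S, -, rfl⟩ := hS
      obtain ⟨T, -, rfl⟩ := hT
      have := congrArg (Finset.erase · 0) h
      simpa [Finset.erase_insert (hnot _)] using this
  · rw [Finset.disjoint_left]
    intro S hS hS'
    obtain ⟨T, -, rfl⟩ := Finset.mem_image.mp hS'
    have := (Finset.mem_powersetCard.mp hS).1 (Finset.mem_insert_self 0 T)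
    exact hnot _ this

theorem isCompact_parallelepiped {ι E : Type*} [Fintype ι] [AddCommGroup E] [Module ℝ E]
    [TopologicalSpace E] [ContinuousAdd E] [ContinuousSMul ℝ E] (v : ι → E) :
    IsCompact (parallelepiped v) :=
  isCompact_Icc.image (by fun_prop)

/-- Adding the first coordinate vector to the generators of a zonotope increases its volume by the
volume of its projection along that coordinate. -/
theorem volume_parallelepiped_of_eq_single {d n : ℕ} {p : Fin (n + 1) → Fin (d + 1) → ℝ}
    (hp : p 0 = Pi.single 0 1) :
    volume (parallelepiped p) = volume (parallelepiped fun i : Fin n => p i.succ) +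
      volume (parallelepiped fun i : Fin n => Fin.tail (p i.succ)) := by
  let e := MeasurableEquiv.piFinSuccAbove (fun _ : Fin (d + 1) => ℝ) 0
  have he : MeasurePreserving e := volume_preserving_piFinSuccAbove (fun _ => ℝ) 0
  let L := (Fin.consLinearEquiv ℝ (fun _ : Fin (d + 1) => ℝ)).symm.toLinearMap
  have hL : ∀ x, L x = (x 0, Fin.tail x) := fun x => rfl
  have heL : ∀ s, e '' s = L '' s := fun s => rfl
  have hvol : ∀ {m : ℕ} (q : Fin m → Fin (d + 1) → ℝ),
      volume (parallelepiped q) = (volume.prod volume) (parallelepiped (L ∘ q)) := by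
    intro m q
    rw [← image_parallelepiped, ← heL, e.image_eq_preimage_symm]
    exact ((he.symm e).measure_preimage_equiv _).symm
  have hproj : parallelepiped (fun i : Fin n => Fin.tail (p i.succ)) =
      Prod.snd '' parallelepiped (L ∘ fun i : Fin n => p i.succ) :=
    (image_parallelepiped (LinearMap.snd ℝ ℝ (Fin d → ℝ)) (L ∘ fun i : Fin n => p i.succ)).symm
  rw [hvol, hvol, hproj, ← measure_prod_add_segment volume (isCompact_parallelepiped _)
    (convex_parallelepiped _), parallelepiped_eq_sum_segment, parallelepiped_eq_sum_segment,
    Fin.sum_univ_succ]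
  congr 3
  simp only [Function.comp_apply, hL, hp]
  ext i <;> simp [Fin.tail]

theorem volume_real_parallelepiped_fin_zero {n : ℕ} (p : Fin n → Fin 0 → ℝ) :
    volume.real (parallelepiped p) = 1 := by
  have hne : (parallelepiped p).Nonempty := ⟨_, Set.mem_image_of_mem _ ⟨le_rfl, zero_le_one⟩⟩
  rw [hne.eq_univ, volume_pi, Measure.pi_of_empty]
  simp

theorem volume_real_parallelepiped {d n : ℕ} (p : Fin n → Fin d → ℝ) :
    volume.real (parallelepiped p) =
      ∑ S ∈ (Finset.univ : Finset (Fin n)).powersetCard d, absMinor p S := by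
  induction n generalizing d with
  | zero =>
    cases d with
    | zero => simp [volume_real_parallelepiped_fin_zero, absMinor]
    | succ d =>
      rw [Finset.powersetCard_eq_empty.mpr (by simp)]
      simp [parallelepiped_eq_sum_segment, measureReal_def, ← Set.singleton_zero]
  | succ n ih =>
    cases d with
    | zero => simp [volume_real_parallelepiped_fin_zero, absMinor]
    | succ d =>
      rw [sum_powersetCard_fin_succ]
      simp only [absMinor_map_succ]
      rw [← ih]
      by_cases hp : p 0 = 0
      · rw [Finset.sum_eq_zero fun S hS =>
          absMinor_insert_zero_of_eq_zero hp (Finset.mem_powersetCard.mp hS).2]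
        simp [parallelepiped_eq_sum_segment, Fin.sum_univ_succ, hp]
      · obtain ⟨A, hA⟩ := SeparatingDual.exists_continuousLinearEquiv_apply_eq (R := ℝ) hp
          (show (Pi.single 0 1 : Fin (d + 1) → ℝ) ≠ 0 by simp)
        let f : (Fin (d + 1) → ℝ) →ₗ[ℝ] Fin (d + 1) → ℝ := A.toLinearEquiv.toLinearMap
        have hdet : |LinearMap.det f| ≠ 0 :=
          abs_ne_zero.mpr (LinearEquiv.isUnit_det' A.toLinearEquiv).ne_zero
        have hvol : ∀ {m : ℕ} (q : Fin m → Fin (d + 1) → ℝ),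
            volume.real (parallelepiped fun i => f (q i)) =
              |LinearMap.det f| * volume.real (parallelepiped q) := by
          intro m q
          change volume.real (parallelepiped (f ∘ q)) = _
          rw [← image_parallelepiped, measureReal_def, Measure.addHaar_image_linearMap,
            ENNReal.toReal_mul, ENNReal.toReal_ofReal (abs_nonneg _), measureReal_def]
        have hfin : ∀ {m k : ℕ} (q : Fin m → Fin k → ℝ), volume (parallelepiped q) ≠ ⊤ :=
          fun q => (isCompact_parallelepiped q).measure_lt_top.ne
        have hfp : f (p 0) = Pi.single 0 1 := hA
        apply mul_left_cancel₀ hdet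
        rw [← hvol, mul_add, ← hvol, Finset.mul_sum, measureReal_def,
          volume_parallelepiped_of_eq_single hfp, ENNReal.toReal_add (hfin _) (hfin _)]
        congr 1
        rw [← measureReal_def, ih]
        refine Finset.sum_congr rfl fun S hS => ?_
        rw [← absMinor_linearMap,
          absMinor_insert_zero_of_eq_single hfp (Finset.mem_powersetCard.mp hS).2]

/-- The volume of the zonotope `Z = ∑ᵢ [0, pᵢ]` in `ℝ^d` equals the sum,
over all `d`-element index sets `i₁ < i₂ < … < i_d`, of the absolute value of the determinant
of the `d × d` matrix whose columns are `p_{i₁}, …, p_{i_d}`. -/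
theorem volume_zonotope_eq_sum_abs_det (d n : ℕ) (hd : 1 ≤ d)
    (p : Fin n → EuclideanSpace ℝ (Fin d)) :
    (volume (∑ i : Fin n, segment ℝ (0 : EuclideanSpace ℝ (Fin d)) (p i))).toReal =
      ∑ S ∈ ((Finset.univ : Finset (Fin n)).powersetCard d).attach,
        |Matrix.det (Matrix.of fun i j : Fin d =>
          p (S.1.orderEmbOfFin ((Finset.mem_powersetCard.mp S.2).2) j) i)| := by
  let e := MeasurableEquiv.toLp 2 (Fin d → ℝ)
  have he : MeasurePreserving e := PiLp.volume_preserving_toLp (Fin d)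
  let L := (WithLp.linearEquiv 2 ℝ (Fin d → ℝ)).symm.toLinearMap
  have himage : parallelepiped p = e '' parallelepiped fun i => (p i).ofLp :=
    (image_parallelepiped L _).symm
  rw [← parallelepiped_eq_sum_segment, himage, e.image_eq_preimage_symm,
    (he.symm e).measure_preimage_equiv, ← measureReal_def, volume_real_parallelepiped,
    ← Finset.sum_attach]
  refine Finset.sum_congr rfl fun S _ => ?_
  rw [absMinor, dif_pos (Finset.mem_powersetCard.mp S.2).2]
end

section
/- Let 2 ≤ d ≤ n and let p_1, …, p_n ∈ ℝ^d generate the zonotope Z = Σ_{i=1}^n [0, p_i]. If Z contains a translate of the closed Euclidean unit ball (i.e., the inradius of Z is at least 1), then vol_d(Z) ≥ κ_d · (1 + π²/(12 n²)). -/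
open scoped Pointwise
open MeasureTheory

/-- Splitting off the zeroth coordinate preserves volume. -/
theorem measurePreserving_splitZero (d : ℕ) :
    MeasurePreserving (fun x : EuclideanSpace ℝ (Fin (d + 1)) =>
      ((x 0, WithLp.toLp 2 fun i : Fin d => x i.succ) : ℝ × EuclideanSpace ℝ (Fin d))) := by
  have h1 := PiLp.volume_preserving_ofLp (Fin (d + 1))
  have h2 := volume_preserving_piFinSuccAbove (fun _ : Fin (d + 1) => ℝ) 0
  have h3 := (MeasurePreserving.id (volume : Measure ℝ)).prod (PiLp.volume_preserving_toLp (Fin d))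
  exact h3.comp (h2.comp h1)

theorem MeasureTheory.MeasurePreserving.measure_image_of_injective {X Y : Type*}
    [MeasurableSpace X] [MeasurableSpace Y] {μ : Measure X} {ν : Measure Y} {f : X → Y}
    (hf : MeasurePreserving f μ ν) (hi : Function.Injective f) {s : Set X} (hs : MeasurableSet (f '' s)) :
    ν (f '' s) = μ s := by
  rw [← hf.measure_preimage hs.nullMeasurableSet, hi.preimage_image]

theorem Real.volume_add_Icc {s : Set ℝ} (hc : IsCompact s) (hv : Convex ℝ s) (hne : s.Nonempty)
    {l : ℝ} (hl : 0 ≤ l) : volume (s + Set.Icc 0 l) = volume s + ENNReal.ofReal l := by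
  have hs : s = Set.Icc (sInf s) (sSup s) :=
    eq_Icc_of_connected_compact ⟨hne, hv.isPreconnected⟩ hc
  have hle : sInf s ≤ sSup s := csInf_le_csSup hne hc.bddBelow hc.bddAbove
  rw [hs, Set.Icc_add_Icc hle hl, Real.volume_Icc, Real.volume_Icc,
    ← ENNReal.ofReal_add (by linarith) hl]
  congr 1; ring

theorem volume_add_Icc_prod_singleton {F : Type*} [NormedAddCommGroup F] [NormedSpace ℝ F]
    [MeasureSpace F] [BorelSpace F] [SecondCountableTopology F]
    [SFinite (volume : Measure F)]
    {K : Set (ℝ × F)} (hc : IsCompact K) (hv : Convex ℝ K) {l : ℝ} (hl : 0 ≤ l) :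
    volume (K + Set.Icc (0 : ℝ) l ×ˢ {(0 : F)}) =
      volume K + ENNReal.ofReal l * volume (Prod.snd '' K) := by
  have hK' : IsCompact (K + Set.Icc (0 : ℝ) l ×ˢ {(0 : F)}) :=
    hc.add (isCompact_Icc.prod isCompact_singleton)
  have hsnd : MeasurableSet (Prod.snd '' K) := (hc.image continuous_snd).measurableSet
  rw [Measure.volume_eq_prod, Measure.prod_apply_symm hK'.measurableSet,
    Measure.prod_apply_symm hc.measurableSet, ← lintegral_indicator_const hsnd,
    ← lintegral_add_right _ (measurable_const.indicator hsnd)]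
  congr 1
  ext y
  have hsec : (fun x : ℝ => (x, y)) ⁻¹' (K + Set.Icc (0 : ℝ) l ×ˢ {(0 : F)}) =
      (fun x : ℝ => (x, y)) ⁻¹' K + Set.Icc 0 l := by
    ext x
    simp only [Set.mem_preimage, Set.mem_add, Set.mem_prod, Set.mem_singleton_iff, Prod.exists,
      Prod.mk_add_mk, Prod.mk.injEq]
    constructor
    · rintro ⟨a, b, hab, t, z, ⟨ht, rfl⟩, rfl, rfl⟩
      exact ⟨a, by simpa using hab, t, ht, rfl⟩
    · rintro ⟨a, ha, t, ht, rfl⟩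
      exact ⟨a, y, ha, t, 0, ⟨ht, rfl⟩, rfl, by simp⟩
  rw [hsec]
  by_cases hy : y ∈ Prod.snd '' K
  · rw [Set.indicator_of_mem hy]
    obtain ⟨⟨x, y⟩, hx, rfl⟩ := hy
    refine Real.volume_add_Icc ?_ ?_ ⟨x, hx⟩ hl
    · have : (fun t : ℝ => (t, y)) ⁻¹' K = Prod.fst '' (K ∩ Prod.snd ⁻¹' {y}) := by
        ext t
        simp
      rw [this]
      exact (hc.inter_right (isClosed_singleton.preimage continuous_snd)).image continuous_fst
    · intro a ha b hb s t hs ht hst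
      have := hv ha hb hs ht hst
      simpa [← add_smul, hst] using this
  · have : (fun x : ℝ => (x, y)) ⁻¹' K = ∅ := by
      ext x
      simp only [Set.mem_preimage, Set.mem_empty_iff_false, iff_false]
      exact fun h => hy ⟨_, h, rfl⟩
    simp [this, Set.indicator_of_notMem hy]

/-- A vector can be moved to a nonnegative multiple of the zeroth basis vector. -/
theorem exists_linearIsometryEquiv_map_eq_single {d : ℕ} (q : EuclideanSpace ℝ (Fin (d + 1))) :
    ∃ Φ : EuclideanSpace ℝ (Fin (d + 1)) ≃ₗᵢ[ℝ] EuclideanSpace ℝ (Fin (d + 1)),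
      Φ q = ‖q‖ • EuclideanSpace.single 0 (1 : ℝ) := by
  by_cases hq : q = 0
  · exact ⟨LinearIsometryEquiv.refl ℝ _, by simp [hq]⟩
  have hq' : ‖q‖ ≠ 0 := norm_ne_zero_iff.2 hq
  have ho : Orthonormal ℝ (({0} : Set (Fin (d + 1))).domRestrict fun _ => ‖q‖⁻¹ • q) := by
    constructor
    · intro i
      change ‖‖q‖⁻¹ • q‖ = 1
      rw [norm_smul, norm_inv, norm_norm, inv_mul_cancel₀ hq']
    · intro i j hij
      exact absurd (Subsingleton.elim i j) hij
  obtain ⟨b, hb⟩ := ho.exists_orthonormalBasis_extension_of_card_eq (by simp)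
  refine ⟨b.repr, ?_⟩
  have h0 : b 0 = ‖q‖⁻¹ • q := hb 0 rfl
  have : q = ‖q‖ • b 0 := by rw [h0, smul_inv_smul₀ hq']
  conv_lhs => rw [this, map_smul, b.repr_self]

/-- Along the orthogonal projection `T` in direction `q`, adding a segment `[0, q]` to a convex
body increases its volume by `‖q‖` times the volume of the projection. -/
theorem exists_projection_volume_add_segment {d : ℕ} (q : EuclideanSpace ℝ (Fin (d + 1))) :
    ∃ T : EuclideanSpace ℝ (Fin (d + 1)) →L[ℝ] EuclideanSpace ℝ (Fin d),
      (∀ x, ‖T x‖ ≤ ‖x‖) ∧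
      (∀ c r, Metric.closedBall (T c) r ⊆ T '' Metric.closedBall c r) ∧
      ∀ K : Set (EuclideanSpace ℝ (Fin (d + 1))), IsCompact K → Convex ℝ K → ∀ ε : ℝ, 0 ≤ ε →
        volume.real (K + segment ℝ 0 (ε • q)) =
          volume.real K + ε * ‖q‖ * volume.real (T '' K) := by
  obtain ⟨Φ, hΦ⟩ := exists_linearIsometryEquiv_map_eq_single q
  let S : EuclideanSpace ℝ (Fin (d + 1)) →ₗ[ℝ] ℝ × EuclideanSpace ℝ (Fin d) :=
    { toFun := fun x => (x 0, WithLp.toLp 2 fun i : Fin d => x i.succ)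
      map_add' := fun x y => by ext <;> simp
      map_smul' := fun c x => by ext <;> simp }
  have hS : MeasurePreserving S := measurePreserving_splitZero d
  let R : EuclideanSpace ℝ (Fin (d + 1)) →ₗ[ℝ] ℝ × EuclideanSpace ℝ (Fin d) :=
    S ∘ₗ Φ.toLinearEquiv.toLinearMap
  have hR : MeasurePreserving R := hS.comp Φ.measurePreserving
  have hSi : Function.Injective S := by
    intro x y h
    ext i
    refine Fin.cases ?_ (fun j => ?_) i
    · exact congrArg Prod.fst h
    · exact congrArg (fun z : ℝ × EuclideanSpace ℝ (Fin d) => z.2 j) h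
  have hRi : Function.Injective R := hSi.comp Φ.injective
  have hRc : Continuous R := R.continuous_of_finiteDimensional
  let T : EuclideanSpace ℝ (Fin (d + 1)) →L[ℝ] EuclideanSpace ℝ (Fin d) :=
    (LinearMap.snd ℝ ℝ _ ∘ₗ R).toContinuousLinearMap
  have hT : ∀ x, T x = (R x).2 := fun x => rfl
  have hvol : ∀ K : Set (EuclideanSpace ℝ (Fin (d + 1))), IsCompact K →
      volume (R '' K) = volume K := fun K hK =>
    hR.measure_image_of_injective hRi (hK.image hRc).measurableSet
  have hnorm : ∀ x, ‖x‖ ^ 2 = (R x).1 ^ 2 + ‖(R x).2‖ ^ 2 := by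
    intro x
    rw [← Φ.norm_map x, EuclideanSpace.norm_sq_eq, EuclideanSpace.norm_sq_eq, Fin.sum_univ_succ]
    simp [R, S]
  refine ⟨T, fun x => ?_, fun c r y hy => ?_, fun K hK hKv ε hε => ?_⟩
  · rw [hT]
    exact abs_le_of_sq_le_sq' (by nlinarith [hnorm x, sq_nonneg (R x).1]) (norm_nonneg _) |>.2
  · let z : EuclideanSpace ℝ (Fin (d + 1)) :=
      Φ.symm (WithLp.toLp 2 (Fin.cons 0 fun i => (y - T c) i))
    have hz : R z = (0, y - T c) := by
      ext <;> simp [R, S, z]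
    have hzn : ‖z‖ ≤ r := by
      have h1 := hnorm z
      rw [hz] at h1
      have h2 : ‖z‖ = ‖y - T c‖ := by
        refine (sq_eq_sq₀ (norm_nonneg _) (norm_nonneg _)).1 ?_
        simpa using h1
      rw [h2, ← dist_eq_norm]
      exact hy
    refine ⟨c + z, by simpa [dist_eq_norm] using hzn, ?_⟩
    rw [map_add, hT z, hz]
    simp
  · have hseg : IsCompact (segment ℝ (0 : EuclideanSpace ℝ (Fin (d + 1))) (ε • q)) := by
      rw [segment_eq_image_lineMap]
      exact isCompact_Icc.image (by fun_prop)
    have himg : R '' segment ℝ 0 (ε • q) = Set.Icc 0 (ε * ‖q‖) ×ˢ {0} := by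
      have hq : R (ε • q) = (ε * ‖q‖, 0) := by
        rw [map_smul]
        ext <;> simp [R, S, hΦ]
      have := image_segment ℝ R.toAffineMap 0 (ε • q)
      rw [LinearMap.coe_toAffineMap, map_zero, hq] at this
      rw [this, ← segment_eq_Icc (by positivity), ← Prod.mk_zero_zero,
        ← Prod.image_mk_segment_left, Set.prod_singleton]
    have h := volume_add_Icc_prod_singleton (hK.image hRc) (hKv.linear_image R)
      (mul_nonneg hε (norm_nonneg q))
    rw [← himg, ← Set.image_add, hvol _ (hK.add hseg), hvol _ hK, Set.image_image] at h
    change _ = volume K + ENNReal.ofReal (ε * ‖q‖) * volume (T '' K) at h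
    rw [Measure.real, h, ENNReal.toReal_add hK.measure_ne_top
      (ENNReal.mul_ne_top ENNReal.ofReal_ne_top (hK.image T.continuous).measure_ne_top),
      ENNReal.toReal_mul, ENNReal.toReal_ofReal (by positivity)]
    rfl

theorem isCompact_sum_segment {ι E : Type*} [NormedAddCommGroup E] [NormedSpace ℝ E]
    (s : Finset ι) (p : ι → E) : IsCompact (∑ i ∈ s, segment ℝ 0 (p i)) := by
  classical
  induction s using Finset.induction_on with
  | empty => simp
  | insert a s ha ih =>
    rw [Finset.sum_insert ha]
    refine IsCompact.add ?_ ih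
    rw [segment_eq_image_lineMap]
    exact isCompact_Icc.image (by fun_prop)

theorem convex_sum_segment {ι E : Type*} [AddCommGroup E] [Module ℝ E]
    (s : Finset ι) (p : ι → E) : Convex ℝ (∑ i ∈ s, segment ℝ 0 (p i)) :=
  convex_sum _ fun _ _ => convex_segment _ _

theorem zero_mem_sum_segment {ι E : Type*} [AddCommGroup E] [Module ℝ E]
    (s : Finset ι) (p : ι → E) : (0 : E) ∈ ∑ i ∈ s, segment ℝ 0 (p i) :=
  (Set.mem_finsetSum s _ _).2 ⟨fun _ => 0, fun {_} _ => left_mem_segment ℝ _ _, by simp⟩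

theorem image_sum_segment {ι E F : Type*} [AddCommGroup E] [Module ℝ E] [AddCommGroup F]
    [Module ℝ F] (s : Finset ι) (p : ι → E) (T : E →ₗ[ℝ] F) :
    T '' (∑ i ∈ s, segment ℝ 0 (p i)) = ∑ i ∈ s, segment ℝ 0 (T (p i)) := by
  rw [Set.image_finsetSum]
  refine Finset.sum_congr rfl fun i _ => ?_
  simpa using image_segment ℝ T.toAffineMap 0 (p i)

theorem smul_sum_segment {ι E : Type*} [AddCommGroup E] [Module ℝ E]
    (s : Finset ι) (p : ι → E) (ε : ℝ) :
    ε • (∑ i ∈ s, segment ℝ 0 (p i)) = ∑ i ∈ s, segment ℝ 0 (ε • p i) :=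
  image_sum_segment s p (LinearMap.lsmul ℝ E ε)

theorem norm_le_of_mem_sum_segment {ι E : Type*} [NormedAddCommGroup E] [NormedSpace ℝ E]
    {s : Finset ι} {p : ι → E} {x : E} (hx : x ∈ ∑ i ∈ s, segment ℝ 0 (p i)) :
    ‖x‖ ≤ ∑ i ∈ s, ‖p i‖ := by
  obtain ⟨g, hg, rfl⟩ := (Set.mem_finsetSum s _ _).1 hx
  refine (norm_sum_le _ _).trans (Finset.sum_le_sum fun i hi => ?_)
  obtain ⟨a, b, ha, hb, hab, h⟩ := hg hi
  rw [← h, smul_zero, zero_add, norm_smul, Real.norm_of_nonneg hb]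
  exact mul_le_of_le_one_left (norm_nonneg _) (by linarith)

/-- If the unit ball of `ℝ^(d+1)` has a translate inside a zonotope, then the total length of the
generators is at least the surface area of the ball divided by the volume of the ball in `ℝ^d`. -/
theorem mul_volume_closedBall_le_sum_norm {d : ℕ} {ι : Type*} [Fintype ι]
    {p : ι → EuclideanSpace ℝ (Fin (d + 1))} {c : EuclideanSpace ℝ (Fin (d + 1))}
    (hc : Metric.closedBall c 1 ⊆ ∑ i, segment ℝ 0 (p i)) :
    (d + 1) * volume.real (Metric.closedBall (0 : EuclideanSpace ℝ (Fin (d + 1))) 1) ≤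
      (∑ i, ‖p i‖) * volume.real (Metric.closedBall (0 : EuclideanSpace ℝ (Fin d)) 1) := by
  classical
  choose T hTn _ hTv using fun i => exists_projection_volume_add_segment (p i)
  set P := ∑ i, ‖p i‖ with hP
  have hP0 : 0 ≤ P := Finset.sum_nonneg fun i _ => norm_nonneg _
  set κ := volume.real (Metric.closedBall (0 : EuclideanSpace ℝ (Fin d)) 1) with hκ
  set κ' := volume.real (Metric.closedBall (0 : EuclideanSpace ℝ (Fin (d + 1))) 1) with hκ'
  have hκ'0 : 0 ≤ κ' := measureReal_nonneg
  have upper : ∀ ε : ℝ, 0 ≤ ε → ∀ s : Finset ι,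
      volume.real (Metric.closedBall (0 : EuclideanSpace ℝ (Fin (d + 1))) 1 +
        ∑ i ∈ s, segment ℝ 0 (ε • p i)) ≤
        κ' + ε * (∑ i ∈ s, ‖p i‖) * ((1 + ε * P) ^ d * κ) := by
    intro ε hε s
    induction s using Finset.induction_on with
    | empty => simp [hκ']
    | insert a s ha ih =>
      rw [Finset.sum_insert ha, add_comm (segment _ _ _), ← add_assoc,
        hTv a _ ((isCompact_closedBall _ _).add (isCompact_sum_segment _ _))
          ((convex_closedBall _ _).add (convex_sum_segment _ _)) ε hε, Finset.sum_insert ha]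
      have hT : volume.real (T a '' (Metric.closedBall (0 : EuclideanSpace ℝ (Fin (d + 1))) 1 +
          ∑ i ∈ s, segment ℝ 0 (ε • p i))) ≤ (1 + ε * P) ^ d * κ := by
        have h1 : T a '' (Metric.closedBall (0 : EuclideanSpace ℝ (Fin (d + 1))) 1 +
          ∑ i ∈ s, segment ℝ 0 (ε • p i)) ⊆ Metric.closedBall 0 (1 + ε * P) := by
          rintro _ ⟨_, ⟨x, hx, y, hy, rfl⟩, rfl⟩
          rw [mem_closedBall_zero_iff] at hx ⊢
          have h2 := norm_le_of_mem_sum_segment hy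
          simp only [norm_smul, Real.norm_of_nonneg hε, ← Finset.mul_sum] at h2
          have h3 : ∑ i ∈ s, ‖p i‖ ≤ P :=
            Finset.sum_le_univ_sum_of_nonneg fun i => norm_nonneg _
          calc ‖T a (x + y)‖ ≤ ‖x + y‖ := hTn _ _
            _ ≤ ‖x‖ + ‖y‖ := norm_add_le _ _
            _ ≤ 1 + ε * P := by
              have := mul_le_mul_of_nonneg_left h3 hε
              linarith
        have h4 := Measure.addHaar_real_closedBall' (volume : Measure (EuclideanSpace ℝ (Fin d)))
          0 (r := 1 + ε * P) (by positivity)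
        rw [finrank_euclideanSpace_fin] at h4
        rw [hκ, ← h4]
        exact measureReal_mono h1 (isCompact_closedBall _ _).measure_ne_top
      have := mul_le_mul_of_nonneg_left hT (mul_nonneg hε (norm_nonneg (p a)))
      linarith
  have key : ∀ ε : ℝ, 0 < ε → (d + 1) * κ' ≤ P * κ * (1 + ε * P) ^ d := by
    intro ε hε
    have hsub : Metric.closedBall (ε • c) (1 + ε) ⊆
        Metric.closedBall (0 : EuclideanSpace ℝ (Fin (d + 1))) 1 +
        ∑ i, segment ℝ 0 (ε • p i) := by
      rw [← smul_sum_segment]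
      have h1 := Set.smul_set_mono (a := ε) hc
      rw [smul_closedBall _ _ zero_le_one, Real.norm_of_nonneg hε.le, mul_one] at h1
      refine subset_trans ?_ (Set.add_subset_add_left h1)
      rw [closedBall_add_closedBall zero_le_one hε.le, zero_add]
    have h2 := (measureReal_mono hsub (((isCompact_closedBall _ _).add
      (isCompact_sum_segment _ _)).measure_ne_top (μ := volume))).trans
        (upper ε hε.le Finset.univ)
    rw [Measure.addHaar_real_closedBall' _ _ (by positivity), finrank_euclideanSpace_fin] at h2
    have h3 := one_add_mul_le_pow (by linarith : (-2 : ℝ) ≤ ε) (d + 1)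
    have h4 := mul_le_mul_of_nonneg_right h3 hκ'0
    push_cast at h4
    refine le_of_mul_le_mul_left ?_ hε
    linarith
  have hlim : Filter.Tendsto (fun ε : ℝ => P * κ * (1 + ε * P) ^ d) (nhdsWithin 0 (Set.Ioi 0))
      (nhds (P * κ)) := by
    have : Continuous fun ε : ℝ => P * κ * (1 + ε * P) ^ d := by fun_prop
    simpa using (this.tendsto 0).mono_left nhdsWithin_le_nhds
  exact ge_of_tendsto hlim (eventually_mem_nhdsWithin.mono key)

/-- A lower bound for the volumes of all projections of a zonotope gives a lower bound for its
volume. -/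
theorem sum_norm_mul_le_volume_sum_segment {d : ℕ} {ι : Type*} [Fintype ι]
    {p : ι → EuclideanSpace ℝ (Fin (d + 1))} {c : EuclideanSpace ℝ (Fin (d + 1))}
    (hc : Metric.closedBall c 1 ⊆ ∑ i, segment ℝ 0 (p i)) {A : ℝ}
    (hA : ∀ (q : ι → EuclideanSpace ℝ (Fin d)) (b : EuclideanSpace ℝ (Fin d)),
      Metric.closedBall b 1 ⊆ ∑ i, segment ℝ 0 (q i) →
        A ≤ volume.real (∑ i, segment ℝ 0 (q i))) :
    (∑ i, ‖p i‖) * A ≤ (d + 1) * volume.real (∑ i, segment ℝ 0 (p i)) := by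
  classical
  choose T hTn hTb hTv using fun i => exists_projection_volume_add_segment (p i)
  set Z := ∑ i, segment ℝ 0 (p i) with hZ
  have hZc : IsCompact Z := isCompact_sum_segment _ _
  have hZv : Convex ℝ Z := convex_sum_segment _ _
  have hTA : ∀ i, A ≤ volume.real (T i '' Z) := by
    intro i
    have h1 : T i '' Z = ∑ j, segment ℝ 0 (T i (p j)) :=
      image_sum_segment Finset.univ p (T i).toLinearMap
    rw [h1]
    refine hA _ (T i c) ?_
    rw [← h1]
    exact (hTb i c 1).trans (Set.image_mono hc)
  have lower : ∀ ε : ℝ, 0 ≤ ε → ∀ s : Finset ι,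
      volume.real Z + ε * (∑ i ∈ s, ‖p i‖) * A ≤
        volume.real (Z + ∑ i ∈ s, segment ℝ 0 (ε • p i)) := by
    intro ε hε s
    induction s using Finset.induction_on with
    | empty => simp
    | insert a s ha ih =>
      have hcomp : IsCompact (Z + ∑ i ∈ s, segment ℝ 0 (ε • p i)) :=
        hZc.add (isCompact_sum_segment _ _)
      rw [Finset.sum_insert ha, Finset.sum_insert ha, add_comm (segment _ _ _), ← add_assoc,
        hTv a _ hcomp (hZv.add (convex_sum_segment _ _)) ε hε]
      have h1 : A ≤ volume.real (T a '' (Z + ∑ i ∈ s, segment ℝ 0 (ε • p i))) :=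
        (hTA a).trans <| measureReal_mono
          (Set.image_mono (Set.subset_add_left _ (zero_mem_sum_segment _ _)))
          (hcomp.image (T a).continuous).measure_ne_top
      have := mul_le_mul_of_nonneg_left h1 (mul_nonneg hε (norm_nonneg (p a)))
      linarith
  have key : ∀ ε : ℝ, 0 < ε →
      (∑ i, ‖p i‖) * A ≤ (∑ k ∈ Finset.range (d + 1), (1 + ε) ^ k) * volume.real Z := by
    intro ε hε
    have h1 := lower ε hε.le Finset.univ
    have h2 : (1 + ε) • Z = Z + ε • Z := by
      rw [hZv.add_smul zero_le_one hε.le, one_smul]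
    rw [← smul_sum_segment, ← hZ, ← h2, measureReal_def _ (_ • Z),
      Measure.addHaar_smul, finrank_euclideanSpace_fin, abs_of_nonneg (by positivity),
      ENNReal.toReal_mul, ENNReal.toReal_ofReal (by positivity), ← measureReal_def] at h1
    have h3 := mul_geom_sum (1 + ε) (d + 1)
    rw [add_sub_cancel_left] at h3
    refine le_of_mul_le_mul_left ?_ hε
    rw [← mul_assoc, ← mul_assoc, h3]
    linarith
  have hlim : Filter.Tendsto
      (fun ε : ℝ => (∑ k ∈ Finset.range (d + 1), (1 + ε) ^ k) * volume.real Z)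
      (nhdsWithin 0 (Set.Ioi 0)) (nhds ((d + 1) * volume.real Z)) := by
    have : Continuous fun ε : ℝ =>
      (∑ k ∈ Finset.range (d + 1), (1 + ε) ^ k) * volume.real Z := by fun_prop
    simpa using (this.tendsto 0).mono_left nhdsWithin_le_nhds
  exact ge_of_tendsto hlim (eventually_mem_nhdsWithin.mono key)

/-- A bound for the volume relative to the unit ball passes from zonotopes of inradius at least
`1` in `ℝ^d` to those in `ℝ^(d+1)`. -/
theorem volume_closedBall_mul_le_volume_sum_segment_succ {d : ℕ} {ι : Type*} [Fintype ι]
    {A : ℝ} (hA0 : 0 ≤ A)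
    (hA : ∀ (q : ι → EuclideanSpace ℝ (Fin d)) (b : EuclideanSpace ℝ (Fin d)),
      Metric.closedBall b 1 ⊆ ∑ i, segment ℝ 0 (q i) →
        volume.real (Metric.closedBall (0 : EuclideanSpace ℝ (Fin d)) 1) * A ≤
          volume.real (∑ i, segment ℝ 0 (q i)))
    {p : ι → EuclideanSpace ℝ (Fin (d + 1))} {c : EuclideanSpace ℝ (Fin (d + 1))}
    (hc : Metric.closedBall c 1 ⊆ ∑ i, segment ℝ 0 (p i)) :
    volume.real (Metric.closedBall (0 : EuclideanSpace ℝ (Fin (d + 1))) 1) * A ≤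
      volume.real (∑ i, segment ℝ 0 (p i)) := by
  have h1 := mul_le_mul_of_nonneg_right (mul_volume_closedBall_le_sum_norm hc) hA0
  have h2 := sum_norm_mul_le_volume_sum_segment hc hA
  refine le_of_mul_le_mul_left ?_ (by positivity : (0 : ℝ) < d + 1)
  linarith

theorem exists_norm_eq_one_and_orthogonal_eq_smul (p : EuclideanSpace ℝ (Fin 2)) :
    ∃ ν : EuclideanSpace ℝ (Fin 2), ‖ν‖ = 1 ∧
      (p ≠ 0 → ∀ v, inner ℝ v p = 0 → ∃ t : ℝ, v = t • ν) := by
  by_cases hp : p = 0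
  · exact ⟨EuclideanSpace.single 0 1, by simp, fun h => absurd hp h⟩
  have hn : 0 < ‖p‖ := norm_pos_iff.2 hp
  have hp2 : p 0 ^ 2 + p 1 ^ 2 = ‖p‖ ^ 2 := by
    rw [EuclideanSpace.norm_sq_eq]
    simp
  refine ⟨‖p‖⁻¹ • !₂[-p 1, p 0], ?_, fun _ v hv => ?_⟩
  · have : ‖!₂[-p 1, p 0]‖ = ‖p‖ := by
      refine (sq_eq_sq₀ (norm_nonneg _) hn.le).1 ?_
      rw [EuclideanSpace.norm_sq_eq, ← hp2]
      simp [add_comm]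
    rw [norm_smul, this, norm_inv, norm_norm, inv_mul_cancel₀ hn.ne']
  · have hv' : v 0 * p 0 + v 1 * p 1 = 0 := by
      rw [PiLp.inner_apply] at hv
      simpa [mul_comm] using hv
    refine ⟨(v 1 * p 0 - v 0 * p 1) / ‖p‖, ?_⟩
    ext i
    fin_cases i
    · simp only [Fin.zero_eta, PiLp.smul_apply, smul_eq_mul, Matrix.cons_val_zero]
      field_simp
      rw [← hp2]
      linear_combination p 0 * hv'
    · simp only [Fin.mk_one, PiLp.smul_apply, smul_eq_mul, Matrix.cons_val_one,
        Matrix.cons_val_zero]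
      field_simp
      rw [← hp2]
      linear_combination p 1 * hv'

theorem two_mul_norm_le_sum_abs_inner {ι E : Type*} [Fintype ι] [NormedAddCommGroup E]
    [InnerProductSpace ℝ E] {p : ι → E} {c : E}
    (hc : Metric.closedBall c 1 ⊆ ∑ i, segment ℝ 0 (p i)) (v : E) :
    2 * ‖v‖ ≤ ∑ i, |inner ℝ v (p i)| := by
  by_cases hv : v = 0
  · simp [hv]
  have hn : ‖v‖ ≠ 0 := norm_ne_zero_iff.2 hv
  have hu : ‖‖v‖⁻¹ • v‖ = 1 := by rw [norm_smul, norm_inv, norm_norm, inv_mul_cancel₀ hn]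
  have h1 : c + ‖v‖⁻¹ • v ∈ ∑ i, segment ℝ 0 (p i) := hc (by simp [hu])
  have h2 : c - ‖v‖⁻¹ • v ∈ ∑ i, segment ℝ 0 (p i) := hc (by simp [hu])
  obtain ⟨g, hg, hg'⟩ := (Set.mem_finsetSum _ _ _).1 h1
  obtain ⟨f, hf, hf'⟩ := (Set.mem_finsetSum _ _ _).1 h2
  have h3 : 2 * ‖v‖ = ∑ i, inner ℝ v (g i - f i) := by
    rw [← inner_sum, Finset.sum_sub_distrib, hg', hf']
    have : c + ‖v‖⁻¹ • v - (c - ‖v‖⁻¹ • v) = (2 * ‖v‖⁻¹) • v := by module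
    rw [this, inner_smul_right, real_inner_self_eq_norm_sq]
    field_simp
  rw [h3]
  refine Finset.sum_le_sum fun i _ => ?_
  obtain ⟨a, b, ha, hb, hab, h⟩ := hg (Finset.mem_univ i)
  obtain ⟨a', b', ha', hb', hab', h'⟩ := hf (Finset.mem_univ i)
  rw [← h, ← h', smul_zero, smul_zero, zero_add, zero_add, ← sub_smul, inner_smul_right]
  refine (le_abs_self _).trans ?_
  rw [abs_mul]
  exact mul_le_of_le_one_left (abs_nonneg _) (abs_le.2 ⟨by linarith, by linarith⟩)

/-- A zonotope is determined by its widths. -/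
theorem midpoint_add_mem_sum_segment {ι E : Type*} [Fintype ι] [NormedAddCommGroup E]
    [InnerProductSpace ℝ E] [CompleteSpace E] {p : ι → E} {y : E}
    (hy : ∀ u : E, 2 * inner ℝ u y ≤ ∑ i, |inner ℝ u (p i)|) :
    (1 / 2 : ℝ) • ∑ i, p i + y ∈ ∑ i, segment ℝ 0 (p i) := by
  by_contra hmem
  obtain ⟨f, r, hf, hr⟩ := geometric_hahn_banach_closed_point
    (convex_sum_segment Finset.univ p) (isCompact_sum_segment Finset.univ p).isClosed hmem
  set u := (InnerProductSpace.toDual ℝ E).symm f with hu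
  have hfu : ∀ x, f x = inner ℝ u x := fun x => by simp [hu]
  let x : ι → E := fun i => if 0 ≤ inner ℝ u (p i) then p i else 0
  have hx : ∑ i, x i ∈ ∑ i, segment ℝ 0 (p i) := by
    refine (Set.mem_finsetSum _ _ _).2 ⟨x, fun {i} _ => ?_, rfl⟩
    by_cases h : 0 ≤ inner ℝ u (p i)
    · simp only [x, if_pos h]
      exact right_mem_segment ℝ _ _
    · simp only [x, if_neg h]
      exact left_mem_segment ℝ _ _
  have h1 := (hf _ hx).trans hr
  rw [hfu, hfu, inner_add_right, inner_smul_right, inner_sum, inner_sum] at h1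
  have h2 : 2 * ∑ i, inner ℝ u (x i) =
      ∑ i, inner ℝ u (p i) + ∑ i, |inner ℝ u (p i)| := by
    rw [Finset.mul_sum, ← Finset.sum_add_distrib]
    refine Finset.sum_congr rfl fun i _ => ?_
    by_cases h : 0 ≤ inner ℝ u (p i)
    · simp only [x, if_pos h, abs_of_nonneg h]
      ring
    · simp only [x, if_neg h, abs_of_neg (not_le.1 h), inner_zero_right]
      ring
  linarith [hy u]

/-- In the plane, it suffices to test membership in a zonotope on the normals of its edges. -/
theorem two_mul_inner_le_sum_abs_inner {ι : Type*} [Fintype ι]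
    {p : ι → EuclideanSpace ℝ (Fin 2)} {c y : EuclideanSpace ℝ (Fin 2)}
    (hc : Metric.closedBall c 1 ⊆ ∑ i, segment ℝ 0 (p i))
    (hy : ∀ i, p i ≠ 0 → ∀ v, inner ℝ v (p i) = 0 → inner ℝ v y ≤ ‖v‖)
    (u : EuclideanSpace ℝ (Fin 2)) :
    2 * inner ℝ u y ≤ ∑ i, |inner ℝ u (p i)| := by
  classical
  have hH := two_mul_norm_le_sum_abs_inner hc
  by_cases hu : u = 0
  · simp [hu]
  by_cases hk : ∃ k, p k ≠ 0 ∧ inner ℝ u (p k) = 0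
  · obtain ⟨k, hk, hk'⟩ := hk
    linarith [hy k hk u hk', hH u]
  have ha : ∀ k, p k ≠ 0 → inner ℝ u (p k) ≠ 0 := fun k h h' => hk ⟨k, h, h'⟩
  let w : EuclideanSpace ℝ (Fin 2) := !₂[-u 1, u 0]
  have hw : ∀ t : ℝ, w - t • u ≠ 0 := by
    intro t h
    have h0 : -u 1 - t * u 0 = 0 := by simpa [w] using congrArg (fun z => z 0) h
    have h1 : u 0 - t * u 1 = 0 := by simpa [w] using congrArg (fun z => z 1) h
    have hs : u 0 ^ 2 + u 1 ^ 2 = 0 := by linear_combination u 0 * h1 - u 1 * h0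
    refine hu (norm_eq_zero.1 (pow_eq_zero_iff two_ne_zero |>.1 ?_))
    rw [EuclideanSpace.norm_sq_eq]
    simpa using hs
  let q : ι → ℝ := fun k => inner ℝ w (p k) / inner ℝ u (p k)
  have hq : ∀ k, inner ℝ w (p k) = q k * inner ℝ u (p k) := by
    intro k
    by_cases h : p k = 0
    · simp [h]
    · exact (div_mul_cancel₀ _ (ha k h)).symm
  let S : Finset ι := Finset.univ.filter fun k => p k ≠ 0
  have hS : S.Nonempty := by
    by_contra hS
    have h0 : ∀ k, p k = 0 := fun k => by
      by_contra h
      exact hS ⟨k, by simp [S, h]⟩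
    have := hH u
    simp only [h0, inner_zero_right, abs_zero, Finset.sum_const_zero] at this
    exact hu (norm_le_zero_iff.1 (by linarith))
  obtain ⟨i, hi, himax⟩ := S.exists_max_image q hS
  obtain ⟨j, hj, hjmin⟩ := S.exists_min_image q hS
  have hi0 : p i ≠ 0 := (Finset.mem_filter.1 hi).2
  have hj0 : p j ≠ 0 := (Finset.mem_filter.1 hj).2
  have e1 : ∀ k, inner ℝ (q i • u - w) (p k) = (q i - q k) * inner ℝ u (p k) := fun k => by
    rw [inner_sub_left, inner_smul_left, hq]
    simp only [conj_trivial]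
    ring
  have e2 : ∀ k, inner ℝ (w - q j • u) (p k) = (q k - q j) * inner ℝ u (p k) := fun k => by
    rw [inner_sub_left, inner_smul_left, hq]
    simp only [conj_trivial]
    ring
  have hsum : ∑ k, |inner ℝ (q i • u - w) (p k)| + ∑ k, |inner ℝ (w - q j • u) (p k)| =
      (q i - q j) * ∑ k, |inner ℝ u (p k)| := by
    rw [← Finset.sum_add_distrib, Finset.mul_sum]
    refine Finset.sum_congr rfl fun k _ => ?_
    by_cases h : p k = 0
    · simp [h]
    · have hkS : k ∈ S := by simp [S, h]
      rw [e1, e2, abs_mul, abs_mul, abs_of_nonneg (sub_nonneg.2 (himax k hkS)),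
        abs_of_nonneg (sub_nonneg.2 (hjmin k hkS))]
      ring
  have hlt : 0 < q i - q j := by
    by_contra hle
    have h1 : 0 < ‖q i • u - w‖ := by
      rw [norm_pos_iff, ← neg_ne_zero, neg_sub]
      exact hw _
    have h2 := hH (q i • u - w)
    have h3 : 0 ≤ ∑ k, |inner ℝ (w - q j • u) (p k)| := Finset.sum_nonneg fun _ _ => abs_nonneg _
    have h4 : 0 ≤ ∑ k, |inner ℝ u (p k)| := Finset.sum_nonneg fun _ _ => abs_nonneg _
    nlinarith
  have y1 := hy i hi0 (q i • u - w) (by rw [e1, sub_self, zero_mul])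
  have y2 := hy j hj0 (w - q j • u) (by rw [e2, sub_self, zero_mul])
  have y3 : inner ℝ (q i • u - w) y + inner ℝ (w - q j • u) y = (q i - q j) * inner ℝ u y := by
    rw [← inner_add_left, sub_add_sub_cancel, ← sub_smul, inner_smul_left]
    simp
  refine le_of_mul_le_mul_left ?_ hlt
  linarith [hH (q i • u - w), hH (w - q j • u)]

theorem integral_two_mul_sqrt_sq_sub_sq {R : ℝ} (hR : 1 ≤ R) :
    ∫ x in (1 : ℝ)..R, 2 * √(R ^ 2 - x ^ 2) = R ^ 2 * Real.arccos (1 / R) - √(R ^ 2 - 1) := by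
  have hR0 : 0 < R := by linarith
  have hd : ∀ x ∈ Set.Ioo 1 R, HasDerivAt
      (fun x => x * √(R ^ 2 - x ^ 2) - R ^ 2 * Real.arccos (x / R))
      (2 * √(R ^ 2 - x ^ 2)) x := by
    intro x hx
    have hpos : 0 < R ^ 2 - x ^ 2 := by nlinarith [hx.1, hx.2]
    have hxR : x / R < 1 := (div_lt_one hR0).2 hx.2
    have hxR' : 0 < x / R := div_pos (by linarith [hx.1]) hR0
    have h1 : HasDerivAt (fun x : ℝ => R ^ 2 - x ^ 2) (-(2 * x)) x := by
      simpa using (hasDerivAt_pow 2 x).const_sub (R ^ 2)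
    have h2 := (hasDerivAt_id x).mul (h1.sqrt hpos.ne')
    have h3 := ((Real.hasDerivAt_arccos (by linarith) hxR.ne).comp x
      ((hasDerivAt_id x).div_const R)).const_mul (R ^ 2)
    have hs : √(1 - (x / R) ^ 2) = √(R ^ 2 - x ^ 2) / R := by
      rw [show 1 - (x / R) ^ 2 = (R ^ 2 - x ^ 2) / R ^ 2 by field_simp,
        Real.sqrt_div hpos.le, Real.sqrt_sq hR0.le]
    refine (h2.sub h3).congr_deriv ?_
    simp only [id, hs]
    have hs0 : 0 < √(R ^ 2 - x ^ 2) := Real.sqrt_pos.2 hpos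
    have hsq := Real.sq_sqrt hpos.le
    field_simp
    linear_combination -hsq
  have hcont : Continuous fun x => x * √(R ^ 2 - x ^ 2) - R ^ 2 * Real.arccos (x / R) := by
    have := Real.continuous_arccos
    fun_prop
  rw [intervalIntegral.integral_eq_sub_of_hasDerivAt_of_le hR hcont.continuousOn hd
    (Continuous.intervalIntegrable (by fun_prop) _ _)]
  simp [hR0.ne']

/-- The area of the part of a disc of radius `R` beyond a line at distance `1` from the centre. -/
theorem volume_closedBall_inter_one_lt_inner_le {ν : EuclideanSpace ℝ (Fin 2)} (hν : ‖ν‖ = 1)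
    {R : ℝ} (hR : 1 ≤ R) :
    volume.real (Metric.closedBall 0 R ∩ {x | 1 < inner ℝ ν x}) ≤
      R ^ 2 * Real.arccos (1 / R) - √(R ^ 2 - 1) := by
  obtain ⟨Φ, hΦ⟩ := exists_linearIsometryEquiv_map_eq_single ν
  rw [hν, one_smul] at hΦ
  have h1 : MeasurePreserving (fun x : EuclideanSpace ℝ (Fin 2) => (Φ x 0, Φ x 1)) :=
    (volume_preserving_finTwoArrow ℝ).comp
      ((PiLp.volume_preserving_ofLp (Fin 2)).comp Φ.measurePreserving)
  let C : Set (ℝ × ℝ) := {z | z.1 ^ 2 + z.2 ^ 2 ≤ R ^ 2} ∩ {z | 1 < z.1}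
  have hC : MeasurableSet C :=
    (isClosed_le (by fun_prop) (by fun_prop)).measurableSet.inter
      (isOpen_lt (by fun_prop) (by fun_prop)).measurableSet
  have hpre : Metric.closedBall 0 R ∩ {x | 1 < inner ℝ ν x} =
      (fun x : EuclideanSpace ℝ (Fin 2) => (Φ x 0, Φ x 1)) ⁻¹' C := by
    ext x
    have hx : ‖x‖ ^ 2 = Φ x 0 ^ 2 + Φ x 1 ^ 2 := by
      rw [← Φ.norm_map x, EuclideanSpace.norm_sq_eq]
      simp
    have hi : inner ℝ ν x = Φ x 0 := by
      rw [← Φ.inner_map_map, hΦ, EuclideanSpace.inner_single_left]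
      simp
    simp only [Set.mem_inter_iff, mem_closedBall_zero_iff, Set.mem_ofPred_eq, Set.mem_preimage, C,
      ← hx, hi, sq_le_sq₀ (norm_nonneg x) (zero_le_one.trans hR)]
  have hsec : ∀ x : ℝ, volume (Prod.mk x ⁻¹' C) ≤
      (Set.Ioc 1 R).indicator (fun x => ENNReal.ofReal (2 * √(R ^ 2 - x ^ 2))) x := by
    intro x
    by_cases hx : x ∈ Set.Ioc 1 R
    · rw [Set.indicator_of_mem hx]
      have : Prod.mk x ⁻¹' C ⊆ Set.Icc (-√(R ^ 2 - x ^ 2)) √(R ^ 2 - x ^ 2) := by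
        intro y hy
        exact abs_le.1 (Real.abs_le_sqrt (by linarith [show x ^ 2 + y ^ 2 ≤ R ^ 2 from hy.1]))
      refine (measure_mono this).trans_eq ?_
      rw [Real.volume_Icc]
      congr 1
      ring
    · rw [Set.indicator_of_notMem hx]
      have : Prod.mk x ⁻¹' C = ∅ := by
        refine Set.eq_empty_of_forall_notMem fun y hy => hx ⟨hy.2, ?_⟩
        have h2 : x ^ 2 + y ^ 2 ≤ R ^ 2 := hy.1
        exact (abs_le_of_sq_le_sq' (by nlinarith) (by linarith)).2
      simp [this]
  have hnn : ∀ x : ℝ, 0 ≤ 2 * √(R ^ 2 - x ^ 2) := fun x => by positivity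
  have hvol : volume C ≤ ENNReal.ofReal (R ^ 2 * Real.arccos (1 / R) - √(R ^ 2 - 1)) := by
    rw [← integral_two_mul_sqrt_sq_sub_sq hR, intervalIntegral.integral_of_le hR,
      ofReal_integral_eq_lintegral_ofReal
        (Continuous.integrableOn_Ioc (by fun_prop)) (Filter.Eventually.of_forall hnn),
      ← lintegral_indicator measurableSet_Ioc, Measure.volume_eq_prod, Measure.prod_apply hC]
    exact lintegral_mono hsec
  rw [hpre, measureReal_def, h1.measure_preimage hC.nullMeasurableSet]
  refine ENNReal.toReal_le_of_le_ofReal ?_ hvol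
  rw [← integral_two_mul_sqrt_sq_sub_sq hR]
  exact intervalIntegral.integral_nonneg hR fun x _ => hnn x

theorem Real.add_pow_three_div_three_le_tan {x : ℝ} (h0 : 0 ≤ x) (h1 : x < Real.pi / 2) :
    x + x ^ 3 / 3 ≤ Real.tan x := by
  have hcos : ∀ y ∈ Set.Ico 0 (Real.pi / 2), Real.cos y ≠ 0 := fun y hy =>
    (Real.cos_pos_of_mem_Ioo ⟨by linarith [hy.1, Real.pi_pos], hy.2⟩).ne'
  have hd : ∀ y ∈ Set.Ico 0 (Real.pi / 2),
      HasDerivAt (fun y => Real.tan y - (y + y ^ 3 / 3)) (1 / Real.cos y ^ 2 - (1 + y ^ 2)) y := by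
    intro y hy
    have h2 : HasDerivAt (fun y : ℝ => y + y ^ 3 / 3) (1 + y ^ 2) y :=
      ((hasDerivAt_id y).add ((hasDerivAt_pow 3 y).div_const 3)).congr_deriv (by simp)
    exact (Real.hasDerivAt_tan (hcos y hy)).sub h2
  have hm : MonotoneOn (fun y => Real.tan y - (y + y ^ 3 / 3)) (Set.Ico 0 (Real.pi / 2)) := by
    refine monotoneOn_of_hasDerivWithinAt_nonneg (convex_Ico _ _)
      (fun y hy => (hd y hy).continuousAt.continuousWithinAt)
      (fun y hy => (hd y (interior_subset hy)).hasDerivWithinAt) fun y hy => ?_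
    have hy' := interior_subset hy
    have h3 : y ≤ Real.tan y := Real.le_tan hy'.1 hy'.2
    have h4 := Real.one_add_tan_sq_mul_cos_sq_eq_one (hcos y hy')
    have h5 : 1 / Real.cos y ^ 2 = 1 + Real.tan y ^ 2 := by
      rw [div_eq_iff (pow_ne_zero _ (hcos y hy')), h4]
    rw [h5]
    nlinarith [hy'.1]
  have := hm ⟨le_rfl, by positivity⟩ ⟨h0, h1⟩ h0
  simp at this
  linarith

/-- A planar zonotope with `n` generators and inradius at least `1` has at least the area of the
regular `2n`-gon circumscribed to the unit disc. -/
theorem two_mul_tan_le_volume_sum_segment {n : ℕ} (hn : 2 ≤ n)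
    {p : Fin n → EuclideanSpace ℝ (Fin 2)} {c : EuclideanSpace ℝ (Fin 2)}
    (hc : Metric.closedBall c 1 ⊆ ∑ i, segment ℝ 0 (p i)) :
    2 * n * Real.tan (Real.pi / (2 * n)) ≤ volume.real (∑ i, segment ℝ 0 (p i)) := by
  set Z := ∑ i, segment ℝ 0 (p i) with hZ
  have hn' : (2 : ℝ) ≤ n := by exact_mod_cast hn
  set a := Real.pi / (2 * n) with ha
  have hna : 2 * n * a = Real.pi := by rw [ha]; field_simp
  have ha0 : 0 < a := by positivity
  have ha1 : a < Real.pi / 2 := by nlinarith [Real.pi_pos]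
  have hcos : 0 < Real.cos a := Real.cos_pos_of_mem_Ioo ⟨by linarith, ha1⟩
  set R := 1 / Real.cos a with hRdef
  have hR : 1 ≤ R := by
    rw [hRdef, le_div_iff₀ hcos, one_mul]
    exact Real.cos_le_one a
  have hsqrt : √(R ^ 2 - 1) = Real.tan a := by
    have h1 := Real.one_add_tan_sq_mul_cos_sq_eq_one hcos.ne'
    have h2 : R ^ 2 - 1 = Real.tan a ^ 2 := by
      rw [hRdef, div_pow, one_pow, sub_eq_iff_eq_add, div_eq_iff (pow_ne_zero _ hcos.ne')]
      linarith
    rw [h2, Real.sqrt_sq (Real.tan_pos_of_pos_of_lt_pi_div_two ha0 ha1).le]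
  have harc : Real.arccos (1 / R) = a := by
    rw [hRdef, one_div_one_div, Real.arccos_cos ha0.le (by linarith [Real.pi_pos])]
  choose ν hν hνp using fun i => exists_norm_eq_one_and_orthogonal_eq_smul (p i)
  let m := (1 / 2 : ℝ) • ∑ i, p i
  let cap : EuclideanSpace ℝ (Fin 2) → Set (EuclideanSpace ℝ (Fin 2)) := fun v =>
    Metric.closedBall 0 R ∩ {x | 1 < inner ℝ v x}
  have hcap : ∀ v : EuclideanSpace ℝ (Fin 2), ‖v‖ = 1 →
      volume.real (cap v) ≤ R ^ 2 * a - Real.tan a := by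
    intro v hv
    have := volume_closedBall_inter_one_lt_inner_le hv hR
    rwa [harc, hsqrt] at this
  have hcover : Metric.closedBall 0 R ⊆
      (fun y => m + y) ⁻¹' Z ∪ ⋃ i ∈ Finset.univ, (cap (ν i) ∪ cap (-ν i)) := by
    intro y hy
    by_cases h : ∃ i, y ∈ cap (ν i) ∪ cap (-ν i)
    · exact Or.inr (by simpa using h)
    refine Or.inl (midpoint_add_mem_sum_segment
      (two_mul_inner_le_sum_abs_inner hc fun i hi v hv => ?_))
    obtain ⟨t, rfl⟩ := hνp i hi v hv
    have h1 : inner ℝ (ν i) y ≤ 1 := not_lt.1 fun h1 => h ⟨i, Or.inl ⟨hy, h1⟩⟩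
    have h2 : inner ℝ (-ν i) y ≤ 1 := not_lt.1 fun h2 => h ⟨i, Or.inr ⟨hy, h2⟩⟩
    rw [inner_neg_left] at h2
    rw [inner_smul_left, norm_smul, hν, conj_trivial, mul_one]
    refine (le_abs_self _).trans ?_
    rw [abs_mul, Real.norm_eq_abs]
    exact mul_le_of_le_one_right (abs_nonneg _) (abs_le.2 ⟨by linarith, h1⟩)
  have hZfin : volume ((fun y => m + y) ⁻¹' Z) ≠ ⊤ := by
    rw [measure_preimage_add]
    exact (isCompact_sum_segment _ _).measure_ne_top
  have hcapfin : ∀ v, volume (cap v) ≠ ⊤ := fun v =>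
    measure_ne_top_of_subset Set.inter_subset_left (isCompact_closedBall _ _).measure_ne_top
  have hUfin : volume (⋃ i ∈ Finset.univ, (cap (ν i) ∪ cap (-ν i))) ≠ ⊤ :=
    ((measure_biUnion_finset_le _ _).trans_lt <| ENNReal.sum_lt_top.2 fun i _ =>
      (measure_union_lt_top (hcapfin _).lt_top (hcapfin _).lt_top)).ne
  have hU : volume.real (⋃ i ∈ Finset.univ, (cap (ν i) ∪ cap (-ν i))) ≤
      n * (2 * (R ^ 2 * a - Real.tan a)) := by
    refine (measureReal_biUnion_finset_le _ _).trans ?_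
    refine (Finset.sum_le_card_nsmul _ _ (2 * (R ^ 2 * a - Real.tan a)) fun i _ => ?_).trans_eq
      (by simp)
    refine (measureReal_union_le _ _).trans ?_
    linarith [hcap _ (hν i), hcap (-ν i) (by rw [norm_neg, hν])]
  have htotal : volume.real (Metric.closedBall (0 : EuclideanSpace ℝ (Fin 2)) R) =
      Real.pi * R ^ 2 := by
    rw [measureReal_def, EuclideanSpace.volume_closedBall_fin_two]
    simp [ENNReal.toReal_ofReal (zero_le_one.trans hR), ENNReal.toReal_ofReal Real.pi_pos.le,
      mul_comm]
  have h1 := (measureReal_mono hcover (measure_union_ne_top hZfin hUfin)).trans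
    (measureReal_union_le _ _)
  have h2 : volume.real ((fun y => m + y) ⁻¹' Z) = volume.real Z := by
    rw [measureReal_def, measure_preimage_add, measureReal_def]
  rw [h2, htotal] at h1
  have h3 : n * (2 * (R ^ 2 * a - Real.tan a)) = Real.pi * R ^ 2 - 2 * n * Real.tan a := by
    rw [← hna]; ring
  linarith

theorem volume_closedBall_mul_le_volume_sum_segment {d n : ℕ} (hd : 2 ≤ d) (hn : 2 ≤ n)
    {p : Fin n → EuclideanSpace ℝ (Fin d)} {c : EuclideanSpace ℝ (Fin d)}
    (hc : Metric.closedBall c 1 ⊆ ∑ i, segment ℝ 0 (p i)) :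
    volume.real (Metric.closedBall (0 : EuclideanSpace ℝ (Fin d)) 1) *
        (1 + Real.pi ^ 2 / (12 * (n : ℝ) ^ 2)) ≤ volume.real (∑ i, segment ℝ 0 (p i)) := by
  induction d, hd using Nat.le_induction with
  | base =>
    refine le_trans ?_ (two_mul_tan_le_volume_sum_segment hn hc)
    have hn' : (2 : ℝ) ≤ n := by exact_mod_cast hn
    have hlt : Real.pi / (2 * n) < Real.pi / 2 :=
      div_lt_div_of_pos_left Real.pi_pos two_pos (by linarith)
    have h1 := mul_le_mul_of_nonneg_left
      (Real.add_pow_three_div_three_le_tan (by positivity) hlt) (by positivity : 0 ≤ 2 * (n : ℝ))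
    refine le_trans (le_of_eq ?_) h1
    rw [measureReal_def, EuclideanSpace.volume_closedBall_fin_two]
    simp [ENNReal.toReal_ofReal Real.pi_pos.le]
    field_simp
    ring
  | succ d _ ih =>
    exact volume_closedBall_mul_le_volume_sum_segment_succ (by positivity)
      (fun _ _ h => ih h) hc

/-- Let `2 ≤ d ≤ n` and let `p₁, …, p_n ∈ ℝ^d` generate the zonotope
`Z = ∑ᵢ [0, pᵢ]`. If `Z` contains a translate of the closed Euclidean unit ball (inradius at
least `1`), then `vol_d(Z) ≥ κ_d (1 + π²/(12 n²))`, where `κ_d` is the volume of the unit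
ball. -/
theorem zonotope_volume_ge_of_inradius_ge_one (d n : ℕ) (hd : 2 ≤ d) (hdn : d ≤ n)
    (p : Fin n → EuclideanSpace ℝ (Fin d))
    (hin : ∃ c : EuclideanSpace ℝ (Fin d),
      Metric.closedBall c 1 ⊆ ∑ i : Fin n, segment ℝ (0 : EuclideanSpace ℝ (Fin d)) (p i)) :
    (volume (Metric.closedBall (0 : EuclideanSpace ℝ (Fin d)) 1)).toReal *
        (1 + Real.pi ^ 2 / (12 * (n : ℝ) ^ 2)) ≤
      (volume (∑ i : Fin n, segment ℝ (0 : EuclideanSpace ℝ (Fin d)) (p i))).toReal := by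
  obtain ⟨c, hc⟩ := hin
  exact volume_closedBall_mul_le_volume_sum_segment hd (hd.trans hdn) hc
end

section
/- Let 2 ≤ d ≤ n and let p_1, …, p_n ∈ ℝ^d generate the zonotope Z = Σ_{i=1}^n [0, p_i]. If Z is contained in a translate of the closed Euclidean unit ball (equivalently, the circumradius of Z, which equals (1/2)·max_{u ∈ S^{d−1}} Σ_{i=1}^n |⟨u, p_i⟩|, is at most 1), then Σ_{i=1}^n |p_i| ≤ (d κ_d / κ_{d−1}) · ( 1 − π²/(24 n²) + π⁴/(1920 n⁴) ). Equivalently, 1 − V_1(Z)/V_1(B^d) ≥ π²/(24 n²) − π⁴/(1920 n⁴). -/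
open scoped Pointwise
open MeasureTheory

namespace Zonotope

theorem nonneg_of_hasDerivAt_nonneg {f f' : ℝ → ℝ} (h0 : f 0 = 0)
    (hf : ∀ x, HasDerivAt f (f' x) x) (hf' : ∀ x, 0 ≤ x → 0 ≤ f' x) {x : ℝ} (hx : 0 ≤ x) :
    0 ≤ f x := by
  have hmono : MonotoneOn f (Set.Ici 0) := by
    refine monotoneOn_of_deriv_nonneg (convex_Ici 0)
      (fun y _ => (hf y).continuousAt.continuousWithinAt)
      (fun y _ => (hf y).differentiableAt.differentiableWithinAt) fun y hy => ?_
    rw [interior_Ici] at hy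
    rw [(hf y).deriv]
    exact hf' y (le_of_lt hy)
  simpa [h0] using hmono (Set.mem_Ici.2 le_rfl) (Set.mem_Ici.2 hx) hx

theorem sub_cube_div_six_le_sin {x : ℝ} (hx : 0 ≤ x) : x - x ^ 3 / 6 ≤ Real.sin x := by
  have := nonneg_of_hasDerivAt_nonneg (f := fun x => Real.sin x - (x - x ^ 3 / 6))
    (f' := fun x => Real.cos x - (1 - x ^ 2 / 2)) (by simp)
    (fun y => by
      convert! (Real.hasDerivAt_sin y).sub
        ((hasDerivAt_id y).sub ((hasDerivAt_pow 3 y).div_const 6)) using 1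
      norm_num
      ring)
    (fun y _ => sub_nonneg.2 (Real.one_sub_sq_div_two_le_cos)) hx
  simpa using this

theorem cos_le_quartic {x : ℝ} (hx : 0 ≤ x) : Real.cos x ≤ 1 - x ^ 2 / 2 + x ^ 4 / 24 := by
  have := nonneg_of_hasDerivAt_nonneg (f := fun x => 1 - x ^ 2 / 2 + x ^ 4 / 24 - Real.cos x)
    (f' := fun x => Real.sin x - (x - x ^ 3 / 6)) (by simp)
    (fun y => by
      convert! ((((hasDerivAt_pow 2 y).div_const 2).const_sub 1).add
        ((hasDerivAt_pow 4 y).div_const 24)).sub (Real.hasDerivAt_cos y) using 1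
      norm_num
      ring)
    (fun y hy => sub_nonneg.2 (sub_cube_div_six_le_sin hy)) hx
  simpa using this

theorem sin_le_quintic {x : ℝ} (hx : 0 ≤ x) : Real.sin x ≤ x - x ^ 3 / 6 + x ^ 5 / 120 := by
  have := nonneg_of_hasDerivAt_nonneg (f := fun x => x - x ^ 3 / 6 + x ^ 5 / 120 - Real.sin x)
    (f' := fun x => 1 - x ^ 2 / 2 + x ^ 4 / 24 - Real.cos x) (by simp)
    (fun y => by
      convert! (((hasDerivAt_id y).sub ((hasDerivAt_pow 3 y).div_const 6)).add
        ((hasDerivAt_pow 5 y).div_const 120)).sub (Real.hasDerivAt_sin y) using 1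
      norm_num
      ring)
    (fun y hy => sub_nonneg.2 (cos_le_quartic hy)) hx
  simpa using this

theorem sin_le_tangent {x y : ℝ} (hx : x ∈ Set.Icc 0 Real.pi) (hy : y ∈ Set.Icc 0 Real.pi) :
    Real.sin y ≤ Real.sin x + (y - x) * Real.cos x := by
  have hc := strictConcaveOn_sin_Icc.concaveOn
  rcases lt_trichotomy x y with h | rfl | h
  · have := hc.slope_le_of_hasDerivAt hx hy h (Real.hasDerivAt_sin x)
    rw [slope_def_field, div_le_iff₀ (sub_pos.2 h)] at this
    linarith
  · simp
  · have := hc.le_slope_of_hasDerivAt hy hx h (Real.hasDerivAt_sin x)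
    rw [slope_def_field, le_div_iff₀ (sub_pos.2 h)] at this
    linarith

theorem integral_sinusoid (A B s t : ℝ) :
    ∫ θ in s..t, (A * Real.cos θ + B * Real.sin θ) =
      2 * Real.sin ((t - s) / 2) * (A * Real.cos ((s + t) / 2) + B * Real.sin ((s + t) / 2)) := by
  rw [intervalIntegral.integral_add
    ((Continuous.intervalIntegrable (by fun_prop)) _ _)
    ((Continuous.intervalIntegrable (by fun_prop)) _ _),
    intervalIntegral.integral_const_mul, intervalIntegral.integral_const_mul, integral_cos,
    integral_sin, Real.sin_sub_sin, Real.cos_sub_cos,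
    show (s - t) / 2 = -((t - s) / 2) by ring, Real.sin_neg, add_comm t s]
  ring

theorem eq_zero_of_sinusoid_eq_zero {α β s t : ℝ} (hst : s < t) (hts : t < s + Real.pi)
    (hs : α * Real.cos s + β * Real.sin s = 0) (ht : α * Real.cos t + β * Real.sin t = 0) :
    α = 0 ∧ β = 0 := by
  have h : Real.sin (t - s) ≠ 0 :=
    (Real.sin_pos_of_pos_of_lt_pi (sub_pos.2 hst) (by linarith)).ne'
  rw [Real.sin_sub] at h
  constructor <;> refine (mul_eq_zero.1 ?_).resolve_right h
  · linear_combination Real.sin t * hs - Real.sin s * ht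
  · linear_combination Real.cos s * ht - Real.cos t * hs

theorem exists_sinusoid_eq_zero (α β : ℝ) : ∃ θ, α * Real.cos θ + β * Real.sin θ = 0 := by
  have hc : Continuous fun θ => α * Real.cos θ + β * Real.sin θ := by fun_prop
  rcases le_total 0 α with h | h
  · exact mem_range_of_exists_le_of_exists_ge hc ⟨Real.pi, by simpa⟩ ⟨0, by simpa⟩
  · exact mem_range_of_exists_le_of_exists_ge hc ⟨0, by simpa⟩ ⟨Real.pi, by simpa⟩

theorem abs_eq_sign_mul_of_ne_zero {g : ℝ → ℝ} (hg : Continuous g) {s t : ℝ}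
    (h0 : ∀ θ ∈ Set.Ioo s t, g θ ≠ 0) :
    ∃ ε : ℝ, |ε| = 1 ∧ ∀ θ ∈ Set.Ioo s t, |g θ| = ε * g θ := by
  by_cases hpos : ∀ θ ∈ Set.Ioo s t, 0 < g θ
  · exact ⟨1, by simp, fun θ hθ => by rw [abs_of_pos (hpos θ hθ), one_mul]⟩
  push Not at hpos
  obtain ⟨a, ha, ha'⟩ := hpos
  refine ⟨-1, by simp, fun θ hθ => ?_⟩
  rw [abs_of_nonpos, neg_one_mul]
  by_contra! hlt
  obtain ⟨z, hz, hz'⟩ := isPreconnected_Ioo.intermediate_value ha hθ hg.continuousOn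
    ⟨ha', hlt.le⟩
  exact h0 z hz hz'

/-- If a continuous function has integral at most `K` on every subinterval avoiding a finite set,
then its integral is at most `K` times the number of pieces cut out by the set. -/
theorem integral_le_of_forall_pieces {g : ℝ → ℝ} (hg : Continuous g) {K : ℝ} (S : Finset ℝ)
    {a b : ℝ} (hab : a ≤ b)
    (hK : ∀ s t, a ≤ s → s ≤ t → t ≤ b → (∀ z ∈ S, z ∉ Set.Ioo s t) → ∫ θ in s..t, g θ ≤ K) :
    ∫ θ in a..b, g θ ≤ K * ((S.filter (· ∈ Set.Ioo a b)).card + 1) := by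
  induction hm : (S.filter (· ∈ Set.Ioo a b)).card using Nat.strong_induction_on
    generalizing a b with
  | _ m ih =>
    rcases (S.filter (· ∈ Set.Ioo a b)).eq_empty_or_nonempty with h | ⟨c, hc⟩
    · have hm0 : m = 0 := by rw [← hm, h, Finset.card_empty]
      subst hm0
      simpa using hK a b le_rfl hab le_rfl fun z hz hz' =>
        Finset.notMem_empty z (h ▸ Finset.mem_filter.2 ⟨hz, hz'⟩)
    · have hcI := (Finset.mem_filter.1 hc).2
      have hdis : Disjoint (S.filter (· ∈ Set.Ioo a c)) (S.filter (· ∈ Set.Ioo c b)) :=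
        Finset.disjoint_left.2 fun z h1 h2 =>
          lt_asymm (Finset.mem_filter.1 h1).2.2 (Finset.mem_filter.1 h2).2.1
      have hsub : S.filter (· ∈ Set.Ioo a c) ∪ S.filter (· ∈ Set.Ioo c b) ⊆
          (S.filter (· ∈ Set.Ioo a b)).erase c := by
        intro z hz
        simp only [Finset.mem_union, Finset.mem_filter, Finset.mem_erase, Set.mem_Ioo] at hz ⊢
        obtain ⟨h1, h2⟩ := hcI
        rcases hz with ⟨hS, h3, h4⟩ | ⟨hS, h3, h4⟩
        · exact ⟨h4.ne, hS, h3, h4.trans h2⟩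
        · exact ⟨h3.ne', hS, h1.trans h3, h4⟩
      have hcard := Finset.card_le_card hsub
      rw [Finset.card_union_of_disjoint hdis, Finset.card_erase_of_mem hc, hm] at hcard
      have hmpos : 0 < m := hm ▸ Finset.card_pos.2 ⟨c, hc⟩
      have h1 := ih _ (by omega) hcI.1.le
        (fun s t h1 h2 h3 => hK s t h1 h2 (h3.trans hcI.2.le)) rfl
      have h2 := ih _ (by omega) hcI.2.le
        (fun s t h1 h2 h3 => hK s t (hcI.1.le.trans h1) h2 h3) rfl
      rw [← intervalIntegral.integral_add_adjacent_intervals (hg.intervalIntegrable a c)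
        (hg.intervalIntegrable c b)]
      have hK0 : 0 ≤ K := by simpa using hK a a le_rfl le_rfl hab (by simp)
      have hcard' : (((S.filter (· ∈ Set.Ioo a c)).card : ℝ) +
          (S.filter (· ∈ Set.Ioo c b)).card + 1) ≤ m := by
        exact_mod_cast (by omega : (S.filter (· ∈ Set.Ioo a c)).card +
          (S.filter (· ∈ Set.Ioo c b)).card + 1 ≤ m)
      nlinarith [mul_le_mul_of_nonneg_left hcard' hK0]

theorem integral_sum_abs_sinusoid_piece {ι : Type*} [Fintype ι] (α β : ι → ℝ) {M : ℝ}
    (hM : ∀ θ, ∑ i, |α i * Real.cos θ + β i * Real.sin θ| ≤ M) {s t x : ℝ} (hst : s ≤ t)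
    (hts : t ≤ s + Real.pi) (hx : x ∈ Set.Icc 0 Real.pi)
    (h0 : ∀ i, (α i = 0 ∧ β i = 0) ∨
      ∀ θ ∈ Set.Ioo s t, α i * Real.cos θ + β i * Real.sin θ ≠ 0) :
    ∫ θ in s..t, ((∑ i, |α i * Real.cos θ + β i * Real.sin θ|) - M * Real.cos x) ≤
      M * (2 * Real.sin x - 2 * x * Real.cos x) := by
  have hε : ∀ i, ∃ ε : ℝ, |ε| = 1 ∧ ∀ θ ∈ Set.Ioo s t,
      |α i * Real.cos θ + β i * Real.sin θ| = ε * (α i * Real.cos θ + β i * Real.sin θ) := by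
    intro i
    rcases h0 i with ⟨h1, h2⟩ | h
    · exact ⟨1, by simp, fun θ _ => by simp [h1, h2]⟩
    · exact abs_eq_sign_mul_of_ne_zero (by fun_prop) h
  choose ε hε1 hε using hε
  have hM0 : 0 ≤ M := (Finset.sum_nonneg fun i _ => abs_nonneg _).trans (hM 0)
  have hsum : ∀ θ, ∑ i, ε i * (α i * Real.cos θ + β i * Real.sin θ) =
      (∑ i, ε i * α i) * Real.cos θ + (∑ i, ε i * β i) * Real.sin θ := by
    intro θ
    rw [Finset.sum_mul, Finset.sum_mul, ← Finset.sum_add_distrib]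
    exact Finset.sum_congr rfl fun i _ => by ring
  have hint : ∫ θ in s..t, (∑ i, |α i * Real.cos θ + β i * Real.sin θ|) =
      ∫ θ in s..t, ((∑ i, ε i * α i) * Real.cos θ + (∑ i, ε i * β i) * Real.sin θ) := by
    rw [intervalIntegral.integral_of_le hst, intervalIntegral.integral_of_le hst,
      integral_Ioc_eq_integral_Ioo, integral_Ioc_eq_integral_Ioo]
    refine setIntegral_congr_fun measurableSet_Ioo fun θ hθ => ?_
    rw [← hsum]
    exact Finset.sum_congr rfl fun i _ => hε i θ hθ
  rw [intervalIntegral.integral_sub ((Continuous.intervalIntegrable (by fun_prop)) _ _)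
    (by simp), hint, integral_sinusoid, ← hsum, intervalIntegral.integral_const, smul_eq_mul]
  have hmid : ∑ i, ε i * (α i * Real.cos ((s + t) / 2) + β i * Real.sin ((s + t) / 2)) ≤ M := by
    refine le_trans (Finset.sum_le_sum fun i _ => ?_) (hM ((s + t) / 2))
    refine (le_abs_self _).trans ?_
    rw [abs_mul, hε1, one_mul]
  have hy : (t - s) / 2 ∈ Set.Icc 0 Real.pi := ⟨by linarith, by linarith [Real.pi_pos]⟩
  have hsin := Real.sin_nonneg_of_mem_Icc hy
  have h1 := mul_le_mul_of_nonneg_left hmid (mul_nonneg zero_le_two hsin)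
  have h2 := mul_le_mul_of_nonneg_left (sin_le_tangent hx hy) hM0
  linarith

/-- A zonogon with `n` generators contained in a disc has, up to normalisation, at most the
perimeter of the regular `2n`-gon inscribed in that disc. -/
theorem integral_sum_abs_sinusoid_le {n : ℕ} (hn : 0 < n) (α β : Fin n → ℝ) {M : ℝ}
    (hM : ∀ θ, ∑ i, |α i * Real.cos θ + β i * Real.sin θ| ≤ M) :
    ∫ θ in 0..Real.pi, ∑ i, |α i * Real.cos θ + β i * Real.sin θ| ≤
      2 * n * Real.sin (Real.pi / (2 * n)) * M := by
  classical
  have hM0 : 0 ≤ M := (Finset.sum_nonneg fun i _ => abs_nonneg _).trans (hM 0)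
  have hn' : (1 : ℝ) ≤ n := by exact_mod_cast hn
  set x := Real.pi / (2 * n) with hxdef
  have hx : x ∈ Set.Icc 0 Real.pi :=
    ⟨by positivity, div_le_self Real.pi_pos.le (by linarith)⟩
  by_cases hne : ∀ i, α i = 0 ∧ β i = 0
  · simp only [fun i => (hne i).1, fun i => (hne i).2, zero_mul, add_zero, abs_zero,
      Finset.sum_const_zero, intervalIntegral.integral_zero]
    have := Real.sin_nonneg_of_mem_Icc hx
    positivity
  push Not at hne
  obtain ⟨j, hj⟩ := hne
  obtain ⟨a, ha⟩ := exists_sinusoid_eq_zero (α j) (β j)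
  have hzero : ∀ i, ∃ z, (α i = 0 ∧ β i = 0) ∨
      ∀ θ ∈ Set.Ioo a (a + Real.pi), α i * Real.cos θ + β i * Real.sin θ = 0 → θ = z := by
    intro i
    by_cases h : ∃ z ∈ Set.Ioo a (a + Real.pi), α i * Real.cos z + β i * Real.sin z = 0
    · obtain ⟨z, hz, hz0⟩ := h
      refine ⟨z, or_iff_not_imp_left.2 fun hi θ hθ hθ0 => ?_⟩
      by_contra hzθ
      rcases lt_or_gt_of_ne hzθ with h | h
      · exact hi (eq_zero_of_sinusoid_eq_zero h (by linarith [hθ.1, hz.2]) hθ0 hz0)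
      · exact hi (eq_zero_of_sinusoid_eq_zero h (by linarith [hθ.2, hz.1]) hz0 hθ0)
    · push Not at h
      exact ⟨0, Or.inr fun θ hθ hθ0 => absurd hθ0 (h θ hθ)⟩
  choose z hz using hzero
  let f : ℝ → ℝ := fun θ => ∑ i, |α i * Real.cos θ + β i * Real.sin θ|
  have hf : Continuous f := by fun_prop
  have hper : Function.Periodic f Real.pi := by
    intro θ
    refine Finset.sum_congr rfl fun i _ => ?_
    rw [Real.cos_add_pi, Real.sin_add_pi, ← abs_neg]
    congr 1
    ring
  have hshift : ∫ θ in 0..Real.pi, f θ = ∫ θ in a..a + Real.pi, f θ := by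
    simpa using hper.intervalIntegral_add_eq 0 a
  set S := (Finset.univ.erase j).image z with hS
  have hcard : ((S.filter (· ∈ Set.Ioo a (a + Real.pi))).card : ℝ) + 1 ≤ n := by
    have h1 : (S.filter (· ∈ Set.Ioo a (a + Real.pi))).card ≤ n - 1 := by
      refine (Finset.card_filter_le _ _).trans (Finset.card_image_le.trans ?_)
      rw [Finset.card_erase_of_mem (Finset.mem_univ j), Finset.card_univ, Fintype.card_fin]
    exact_mod_cast (by omega : (S.filter (· ∈ Set.Ioo a (a + Real.pi))).card + 1 ≤ n)
  have hK0 : 0 ≤ M * (2 * Real.sin x - 2 * x * Real.cos x) := by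
    have := sin_le_tangent hx (y := 0) ⟨le_rfl, Real.pi_pos.le⟩
    rw [Real.sin_zero] at this
    exact mul_nonneg hM0 (by linarith)
  have key := integral_le_of_forall_pieces (g := fun θ => f θ - M * Real.cos x) (by fun_prop) S
    (a := a) (b := a + Real.pi) (K := M * (2 * Real.sin x - 2 * x * Real.cos x))
    (by linarith [Real.pi_pos]) (fun s t has hst htb hSst =>
      integral_sum_abs_sinusoid_piece α β hM hst (by linarith) hx fun i => by
        rcases hz i with h | h
        · exact Or.inl h
        · refine Or.inr fun θ hθ hθ0 => ?_
          have hθI : θ ∈ Set.Ioo a (a + Real.pi) := ⟨has.trans_lt hθ.1, hθ.2.trans_le htb⟩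
          by_cases hij : i = j
          · subst hij
            have := eq_zero_of_sinusoid_eq_zero hθI.1 hθI.2 ha hθ0
            exact hj this.1 this.2
          · exact hSst (z i) (Finset.mem_image_of_mem z (by simp [hij])) (h θ hθI hθ0 ▸ hθ))
  have key' := key.trans (mul_le_mul_of_nonneg_left hcard hK0)
  rw [intervalIntegral.integral_sub (hf.intervalIntegrable _ _) (by simp),
    intervalIntegral.integral_const, smul_eq_mul, ← hshift] at key'
  have hpi : Real.pi = 2 * n * x := by
    rw [hxdef]
    field_simp
  have : ∫ θ in 0..Real.pi, f θ ≤ M * (2 * Real.sin x - 2 * x * Real.cos x) * n +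
      (2 * n * x) * (M * Real.cos x) := by
    rw [← hpi]
    linarith
  calc _ ≤ _ := this
    _ = _ := by ring

section Gaussian

theorem integral_Ioi_pow_mul_exp_neg_sq (k : ℕ) :
    ∫ y in Set.Ioi (0 : ℝ), y ^ k * Real.exp (-y ^ 2) = 1 / 2 * Real.Gamma ((k + 1) / 2) := by
  have := integral_rpow_mul_exp_neg_rpow (p := 2) (q := k) two_pos
    (by linarith [Nat.cast_nonneg (α := ℝ) k])
  rw [← this]
  refine setIntegral_congr_fun measurableSet_Ioi fun y _ => ?_
  simp only [Real.rpow_natCast, Real.rpow_two]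

theorem integral_norm_mul_exp_neg_sq (d : ℕ) (hd : d ≠ 0) :
    ∫ z : EuclideanSpace ℝ (Fin d), ‖z‖ * Real.exp (-‖z‖ ^ 2) =
      d * (volume (Metric.closedBall (0 : EuclideanSpace ℝ (Fin d)) 1)).toReal *
        (1 / 2 * Real.Gamma ((d + 1) / 2)) := by
  have : Nonempty (Fin d) := Fin.pos_iff_nonempty.1 (Nat.pos_of_ne_zero hd)
  rw [integral_fun_norm_addHaar volume (fun y => y * Real.exp (-y ^ 2)),
    finrank_euclideanSpace_fin, nsmul_eq_mul, smul_eq_mul, Measure.real,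
    Measure.addHaar_closedBall_eq_addHaar_ball, mul_assoc, ← integral_Ioi_pow_mul_exp_neg_sq]
  congr 2
  refine setIntegral_congr_fun measurableSet_Ioi fun y _ => ?_
  simp only [smul_eq_mul]
  rw [← mul_assoc, pow_sub_one_mul hd]

theorem integral_exp_neg_norm_sq (m : ℕ) (hm : m ≠ 0) :
    ∫ z : EuclideanSpace ℝ (Fin m), Real.exp (-‖z‖ ^ 2) =
      (volume (Metric.closedBall (0 : EuclideanSpace ℝ (Fin m)) 1)).toReal *
        Real.Gamma ((m : ℝ) / 2 + 1) := by
  have : Nonempty (Fin m) := Fin.pos_iff_nonempty.1 (Nat.pos_of_ne_zero hm)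
  have hm' : (m : ℝ) ≠ 0 := Nat.cast_ne_zero.2 hm
  rw [integral_fun_norm_addHaar volume (fun y => Real.exp (-y ^ 2)),
    finrank_euclideanSpace_fin, nsmul_eq_mul, smul_eq_mul, Measure.real,
    Measure.addHaar_closedBall_eq_addHaar_ball]
  simp only [smul_eq_mul]
  rw [integral_Ioi_pow_mul_exp_neg_sq, Nat.cast_sub (Nat.pos_of_ne_zero hm), Nat.cast_one,
    sub_add_cancel, Real.Gamma_add_one (by positivity)]
  ring

theorem integral_abs_mul_exp_neg_sq : ∫ t : ℝ, |t| * Real.exp (-t ^ 2) = 1 := by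
  have h := integral_comp_abs (f := fun t => t * Real.exp (-t ^ 2))
  simp only [sq_abs] at h
  have h1 := integral_Ioi_pow_mul_exp_neg_sq 1
  norm_num at h1
  rw [h, h1]
  norm_num

theorem integral_prod_euclideanSpace {d : ℕ} (f : Fin d → ℝ → ℝ) :
    ∫ z : EuclideanSpace ℝ (Fin d), ∏ i, f i (z i) = ∏ i, ∫ t, f i t := by
  rw [← integral_fintype_prod_volume_eq_prod,
    ← (PiLp.volume_preserving_toLp (Fin d)).integral_comp
      (MeasurableEquiv.toLp 2 _).measurableEmbedding]

theorem exp_neg_norm_sq_eq_prod {d : ℕ} (z : EuclideanSpace ℝ (Fin d)) :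
    Real.exp (-‖z‖ ^ 2) = ∏ i, Real.exp (-z i ^ 2) := by
  rw [EuclideanSpace.real_norm_sq_eq, ← Real.exp_sum, Finset.sum_neg_distrib]

theorem integral_abs_coord_mul_exp_neg_sq (m : ℕ) :
    ∫ z : EuclideanSpace ℝ (Fin (m + 1)), |z 0| * Real.exp (-‖z‖ ^ 2) =
      ∫ z : EuclideanSpace ℝ (Fin m), Real.exp (-‖z‖ ^ 2) := by
  have h := integral_prod_euclideanSpace (d := m + 1)
    (Fin.cons (fun t => |t| * Real.exp (-t ^ 2)) fun _ t => Real.exp (-t ^ 2))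
  simp only [Fin.prod_univ_succ, Fin.cons_zero, Fin.cons_succ, integral_abs_mul_exp_neg_sq,
    one_mul] at h
  simp only [exp_neg_norm_sq_eq_prod]
  rw [integral_prod_euclideanSpace fun _ t => Real.exp (-t ^ 2), ← h]
  simp only [Fin.prod_univ_succ, ← mul_assoc]

end Gaussian

section Invariance

variable {E : Type*} [NormedAddCommGroup E] [InnerProductSpace ℝ E]

theorem eq_norm_mul_of_isometry_invariant {F : E → ℝ} (hF : ∀ (g : E ≃ₗᵢ[ℝ] E) p, F (g p) = F p)
    (hs : ∀ (c : ℝ) p, 0 ≤ c → F (c • p) = c * F p) {e : E} (he : ‖e‖ = 1) (p : E) :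
    F p = ‖p‖ * F e := by
  have h : ‖‖p‖ • e‖ = ‖p‖ := by simp [norm_smul, he]
  rw [← hs _ _ (norm_nonneg p), ← hF _ (‖p‖ • e), Submodule.reflection_sub h]

variable {Ω : Type*} [MeasurableSpace Ω] {μ : Measure Ω}

theorem integral_abs_inner_eq_norm_mul {w : Ω → E}
    (hw : ∀ (g : E ≃ₗᵢ[ℝ] E) p, ∫ ω, |inner ℝ (w ω) (g p)| ∂μ = ∫ ω, |inner ℝ (w ω) p| ∂μ)
    {e : E} (he : ‖e‖ = 1) (p : E) :
    ∫ ω, |inner ℝ (w ω) p| ∂μ = ‖p‖ * ∫ ω, |inner ℝ (w ω) e| ∂μ := by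
  refine eq_norm_mul_of_isometry_invariant (F := fun p => ∫ ω, |inner ℝ (w ω) p| ∂μ) hw ?_ he p
  intro c p hc
  simp_rw [inner_smul_right, abs_mul, abs_of_nonneg hc, integral_const_mul]

variable [MeasurableSpace E] [BorelSpace E] [FiniteDimensional ℝ E]

theorem integral_abs_inner_mul_exp_neg_sq {e : E} (he : ‖e‖ = 1) (q : E) :
    ∫ z, |inner ℝ q z| * Real.exp (-‖z‖ ^ 2) =
      ‖q‖ * ∫ z, |inner ℝ e z| * Real.exp (-‖z‖ ^ 2) := by
  refine eq_norm_mul_of_isometry_invariant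
    (F := fun q => ∫ z, |inner ℝ q z| * Real.exp (-‖z‖ ^ 2)) ?_ ?_ he q
  · intro g p
    rw [← g.measurePreserving.integral_comp g.toHomeomorph.measurableEmbedding]
    simp
  · intro c p hc
    simp_rw [inner_smul_left, abs_mul, mul_assoc, integral_const_mul]
    simp [abs_of_nonneg hc]

/-- The constant of proportionality in the average of `|⟪w, p⟫|` over an isometry-invariant random
vector `w`, found by averaging over a Gaussian `p`. -/
theorem integral_abs_inner_mul_gaussian [SFinite μ] {w : Ω → E} (hwi : Integrable w μ)
    (hw : ∀ (g : E ≃ₗᵢ[ℝ] E) p, ∫ ω, |inner ℝ (w ω) (g p)| ∂μ = ∫ ω, |inner ℝ (w ω) p| ∂μ)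
    (hN : Integrable fun z : E => ‖z‖ * Real.exp (-‖z‖ ^ 2)) {e : E} (he : ‖e‖ = 1) :
    (∫ ω, |inner ℝ (w ω) e| ∂μ) * ∫ z : E, ‖z‖ * Real.exp (-‖z‖ ^ 2) =
      (∫ ω, ‖w ω‖ ∂μ) * ∫ z, |inner ℝ e z| * Real.exp (-‖z‖ ^ 2) := by
  have hint : Integrable (Function.uncurry fun (z : E) ω =>
      |inner ℝ (w ω) z| * Real.exp (-‖z‖ ^ 2)) (volume.prod μ) := by
    refine (hN.mul_prod hwi.norm).mono' ?_ (Filter.Eventually.of_forall fun x => ?_)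
    · have h1 : AEStronglyMeasurable (fun x : E × Ω => w x.2) (volume.prod μ) :=
        hwi.aestronglyMeasurable.comp_snd
      have h2 : AEStronglyMeasurable (fun x : E × Ω => x.1) (volume.prod μ) :=
        measurable_fst.aestronglyMeasurable
      exact ((h1.inner (𝕜 := ℝ) h2).norm).mul
        (Real.continuous_exp.comp_aestronglyMeasurable (h2.norm.pow 2).neg)
    · rw [Function.uncurry_def, Real.norm_eq_abs, abs_mul, abs_abs, Real.abs_exp]
      calc _ ≤ (‖w x.2‖ * ‖x.1‖) * Real.exp (-‖x.1‖ ^ 2) := by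
            gcongr
            exact abs_real_inner_le_norm _ _
        _ = _ := by ring
  calc _ = ∫ z : E, ∫ ω, |inner ℝ (w ω) z| * Real.exp (-‖z‖ ^ 2) ∂μ ∂volume := by
        rw [← integral_const_mul]
        congr 1 with z
        rw [integral_mul_const, integral_abs_inner_eq_norm_mul hw he z]
        ring
    _ = ∫ ω, ∫ z : E, |inner ℝ (w ω) z| * Real.exp (-‖z‖ ^ 2) ∂volume ∂μ :=
        integral_integral_swap hint
    _ = _ := by
        rw [← integral_mul_const]
        congr 1 with ω
        exact integral_abs_inner_mul_exp_neg_sq he (w ω)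

end Invariance

section Frame

variable {E : Type*} [NormedAddCommGroup E] [InnerProductSpace ℝ E]

/-- The component of `‖x‖ ^ 2 • y` orthogonal to `x`. -/
noncomputable def orthPart (x y : E) : E := ‖x‖ ^ 2 • y - inner ℝ x y • x

/-- The point at angle `θ` on the circle of radius `‖x‖ * ‖orthPart x y‖` in the plane spanned by
`x` and `y`. -/
noncomputable def circlePoint (ω : (E × E) × ℝ) : E :=
  Real.cos ω.2 • (‖orthPart ω.1.1 ω.1.2‖ • ω.1.1) + Real.sin ω.2 • (‖ω.1.1‖ • orthPart ω.1.1 ω.1.2)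

theorem inner_orthPart (x y : E) : inner ℝ x (orthPart x y) = 0 := by
  rw [orthPart, inner_sub_right, inner_smul_right, inner_smul_right, real_inner_self_eq_norm_sq]
  ring

theorem continuous_circlePoint : Continuous (circlePoint : (E × E) × ℝ → E) := by
  unfold circlePoint orthPart
  fun_prop

theorem norm_circlePoint (ω : (E × E) × ℝ) :
    ‖circlePoint ω‖ = ‖ω.1.1‖ * ‖orthPart ω.1.1 ω.1.2‖ := by
  rw [← sq_eq_sq₀ (norm_nonneg _) (by positivity), circlePoint, norm_add_sq_real]
  simp only [inner_smul_left, inner_smul_right, inner_orthPart, norm_smul, mul_zero,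
    add_zero, Real.norm_eq_abs, mul_pow, sq_abs]
  linear_combination ‖ω.1.1‖ ^ 2 * ‖orthPart ω.1.1 ω.1.2‖ ^ 2 * Real.sin_sq_add_cos_sq ω.2

theorem inner_circlePoint (x : E × E) (θ : ℝ) (p : E) : inner ℝ (circlePoint (x, θ)) p =
    inner ℝ (‖orthPart x.1 x.2‖ • x.1) p * Real.cos θ +
      inner ℝ (‖x.1‖ • orthPart x.1 x.2) p * Real.sin θ := by
  rw [circlePoint, inner_add_left, real_inner_smul_left, real_inner_smul_left _ _ (Real.sin θ)]
  ring

theorem circlePoint_map (g : E ≃ₗᵢ[ℝ] E) (ω : (E × E) × ℝ) :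
    circlePoint (Prod.map (Prod.map g g) id ω) = g (circlePoint ω) := by
  have h (x y : E) : orthPart (g x) (g y) = g (orthPart x y) := by simp [orthPart]
  simp [circlePoint, h]

variable [MeasurableSpace E] [BorelSpace E] [FiniteDimensional ℝ E]

variable (E) in
/-- The uniform measure on pairs of points of the unit ball. -/
noncomputable def pairMeasure : Measure (E × E) :=
  (volume.restrict (Metric.closedBall 0 1)).prod (volume.restrict (Metric.closedBall 0 1))

variable (E) in
/-- The product of `pairMeasure E` and the uniform measure on half a turn. -/
noncomputable def frameMeasure : Measure ((E × E) × ℝ) :=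
  (pairMeasure E).prod (volume.restrict (Set.Ioc 0 Real.pi))

theorem pairMeasure_eq_restrict : pairMeasure E =
    volume.restrict (Metric.closedBall (0 : E) 1 ×ˢ Metric.closedBall (0 : E) 1) := by
  rw [pairMeasure, Measure.prod_restrict, Measure.volume_eq_prod]

instance : IsFiniteMeasure (pairMeasure E) := by
  have : IsFiniteMeasure (volume.restrict (Metric.closedBall (0 : E) 1)) :=
    ⟨by simpa using measure_closedBall_lt_top⟩
  unfold pairMeasure
  infer_instance

instance : IsFiniteMeasure (frameMeasure E) := by
  unfold frameMeasure
  infer_instance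

theorem integrable_frameMeasure_of_continuous {F : Type*} [NormedAddCommGroup F]
    {f : (E × E) × ℝ → F} (hf : Continuous f) : Integrable f (frameMeasure E) := by
  have h : frameMeasure E = volume.restrict
      ((Metric.closedBall (0 : E) 1 ×ˢ Metric.closedBall (0 : E) 1) ×ˢ Set.Ioc 0 Real.pi) := by
    rw [frameMeasure, pairMeasure_eq_restrict, Measure.prod_restrict, ← Measure.volume_eq_prod]
  rw [h]
  have hK : IsCompact
      ((Metric.closedBall (0 : E) 1 ×ˢ Metric.closedBall (0 : E) 1) ×ˢ Set.Icc 0 Real.pi) :=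
    ((isCompact_closedBall _ _).prod (isCompact_closedBall _ _)).prod isCompact_Icc
  exact (hf.continuousOn.integrableOn_compact hK).mono_set
    (Set.prod_mono subset_rfl Set.Ioc_subset_Icc_self)

theorem measurePreserving_frameMeasure (g : E ≃ₗᵢ[ℝ] E) :
    MeasurePreserving (Prod.map (Prod.map g g) id) (frameMeasure E) (frameMeasure E) := by
  have h : MeasurePreserving g (volume.restrict (Metric.closedBall (0 : E) 1))
      (volume.restrict (Metric.closedBall 0 1)) := by
    simpa using g.measurePreserving.restrict_preimage
      (Metric.isClosed_closedBall (x := (0 : E)) (ε := 1)).measurableSet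
  exact (h.prod h).prod (MeasurePreserving.id _)

theorem integral_abs_inner_circlePoint_map (g : E ≃ₗᵢ[ℝ] E) (p : E) :
    ∫ ω, |inner ℝ (circlePoint ω) (g p)| ∂frameMeasure E =
      ∫ ω, |inner ℝ (circlePoint ω) p| ∂frameMeasure E := by
  rw [← (measurePreserving_frameMeasure g).integral_comp
    ((g.toHomeomorph.prodCongr g.toHomeomorph).prodCongr (Homeomorph.refl ℝ)).measurableEmbedding]
  simp_rw [circlePoint_map, LinearIsometryEquiv.inner_map_map]

theorem integral_frameMeasure {f : (E × E) × ℝ → ℝ} (hf : Continuous f) :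
    ∫ ω, f ω ∂frameMeasure E = ∫ x, (∫ θ in 0..Real.pi, f (x, θ)) ∂pairMeasure E := by
  rw [frameMeasure, integral_prod _ (integrable_frameMeasure_of_continuous hf)]
  simp_rw [intervalIntegral.integral_of_le Real.pi_pos.le]

theorem integrable_integral_frame {f : (E × E) × ℝ → ℝ} (hf : Continuous f) :
    Integrable (fun x => ∫ θ in 0..Real.pi, f (x, θ)) (pairMeasure E) := by
  simpa only [intervalIntegral.integral_of_le Real.pi_pos.le] using
    (integrable_frameMeasure_of_continuous hf).integral_prod_left

theorem integral_norm_circlePoint_pos {e₁ e₂ : E} (h₁ : ‖e₁‖ = 1) (h₂ : ‖e₂‖ = 1)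
    (h : inner ℝ e₁ e₂ = 0) : 0 < ∫ ω, ‖circlePoint ω‖ ∂frameMeasure E := by
  have hc : Continuous fun x : E × E => ‖x.1‖ * ‖orthPart x.1 x.2‖ := by
    unfold orthPart
    fun_prop
  rw [integral_frameMeasure continuous_circlePoint.norm]
  simp_rw [norm_circlePoint, intervalIntegral.integral_const, sub_zero, smul_eq_mul,
    integral_const_mul]
  refine mul_pos Real.pi_pos ?_
  have hint : Integrable (fun x : E × E => ‖x.1‖ * ‖orthPart x.1 x.2‖) (pairMeasure E) := by
    rw [pairMeasure_eq_restrict]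
    exact hc.continuousOn.integrableOn_compact
      ((isCompact_closedBall _ _).prod (isCompact_closedBall _ _))
  rw [integral_pos_iff_support_of_nonneg (fun x => by positivity) hint, pairMeasure_eq_restrict,
    Measure.restrict_apply hc.isOpen_support.measurableSet]
  have hopen : IsOpen (Function.support (fun x : E × E => ‖x.1‖ * ‖orthPart x.1 x.2‖) ∩
      (Metric.ball (0 : E) 1 ×ˢ Metric.ball (0 : E) 1)) :=
    hc.isOpen_support.inter (Metric.isOpen_ball.prod Metric.isOpen_ball)
  refine (hopen.measure_pos volume ⟨((1 / 2 : ℝ) • e₁, (1 / 2 : ℝ) • e₂), ?_, ?_⟩).trans_le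
    (measure_mono (Set.inter_subset_inter_right _
      (Set.prod_mono Metric.ball_subset_closedBall Metric.ball_subset_closedBall)))
  · simp [orthPart, inner_smul_left, inner_smul_right, h, norm_smul, h₁, h₂]
  · simp [norm_smul, h₁, h₂]
    norm_num

/-- If the width function of a zonotope is at most `2`, then the average of its restrictions to
great circles is bounded by the perimeter of a regular `2n`-gon. -/
theorem sum_integral_abs_inner_circlePoint_le {n : ℕ} (hn : 0 < n) (p : Fin n → E)
    (hp : ∀ w : E, ∑ i, |inner ℝ w (p i)| ≤ 2 * ‖w‖) :
    ∑ i, ∫ ω, |inner ℝ (circlePoint ω) (p i)| ∂frameMeasure E ≤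
      4 * n * Real.sin (Real.pi / (2 * n)) / Real.pi * ∫ ω, ‖circlePoint ω‖ ∂frameMeasure E := by
  have hcont : Continuous fun ω : (E × E) × ℝ => ∑ i, |inner ℝ (circlePoint ω) (p i)| := by
    have := continuous_circlePoint (E := E)
    fun_prop
  rw [← integral_finsetSum _ fun i _ => integrable_frameMeasure_of_continuous
      (by have := continuous_circlePoint (E := E); fun_prop),
    integral_frameMeasure hcont, integral_frameMeasure continuous_circlePoint.norm,
    ← integral_const_mul]
  refine integral_mono (integrable_integral_frame hcont)
    ((integrable_integral_frame continuous_circlePoint.norm).const_mul _) fun x => ?_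
  have key := integral_sum_abs_sinusoid_le hn (fun i => inner ℝ (‖orthPart x.1 x.2‖ • x.1) (p i))
    (fun i => inner ℝ (‖x.1‖ • orthPart x.1 x.2) (p i))
    (M := 2 * (‖x.1‖ * ‖orthPart x.1 x.2‖)) fun θ => by
      simpa only [← inner_circlePoint, norm_circlePoint] using hp (circlePoint (x, θ))
  simp_rw [← inner_circlePoint] at key
  simp_rw [norm_circlePoint, intervalIntegral.integral_const, sub_zero, smul_eq_mul]
  refine key.trans_eq ?_
  field_simp
  ring

end Frame

section Zonotope

variable {E : Type*} [NormedAddCommGroup E] [InnerProductSpace ℝ E]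

theorem sum_abs_inner_le_of_zonotope_subset {ι : Type*} [Fintype ι] (p : ι → E) {c : E}
    (h : (∑ i, segment ℝ (0 : E) (p i)) ⊆ Metric.closedBall c 1) (w : E) :
    ∑ i, |inner ℝ w (p i)| ≤ 2 * ‖w‖ := by
  have hmem (P : ι → Prop) [DecidablePred P] : ∑ i, (if P i then p i else 0) ∈ Metric.closedBall c 1 := by
    refine h (Set.finsetSum_mem_finsetSum _ _ _ fun i _ => ?_)
    split_ifs
    · exact right_mem_segment ℝ _ _
    · exact left_mem_segment ℝ _ _
  set a := ∑ i, (if 0 ≤ inner ℝ w (p i) then p i else 0) with ha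
  set b := ∑ i, (if ¬ 0 ≤ inner ℝ w (p i) then p i else 0) with hb
  have hdist : ‖a - b‖ ≤ 2 := by
    rw [← dist_eq_norm]
    have h1 := Metric.mem_closedBall.1 (hmem fun i => 0 ≤ inner ℝ w (p i))
    have h2 := Metric.mem_closedBall'.1 (hmem fun i => ¬ 0 ≤ inner ℝ w (p i))
    rw [← ha] at h1
    rw [← hb] at h2
    linarith [dist_triangle a c b]
  have hsum : ∑ i, |inner ℝ w (p i)| = inner ℝ w (a - b) := by
    rw [ha, hb, ← Finset.sum_sub_distrib, inner_sum]
    refine Finset.sum_congr rfl fun i _ => ?_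
    by_cases hi : 0 ≤ inner ℝ w (p i)
    · simp [hi]
    · simp [hi, abs_of_neg (not_le.1 hi)]
  rw [hsum, mul_comm]
  exact (real_inner_le_norm _ _).trans (mul_le_mul_of_nonneg_left hdist (norm_nonneg w))

end Zonotope

end Zonotope

/-- Let `2 ≤ d ≤ n` and let `p₁, …, p_n ∈ ℝ^d` generate the zonotope
`Z = ∑ᵢ [0, pᵢ]`. If `Z` is contained in a translate of the closed Euclidean unit ball
(circumradius at most `1`), then the first intrinsic volume `V₁(Z) = ∑ᵢ ‖pᵢ‖` satisfies
`∑ᵢ ‖pᵢ‖ ≤ (d κ_d / κ_{d-1}) (1 - π²/(24 n²) + π⁴/(1920 n⁴))`, i.e.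
`1 - V₁(Z)/V₁(B^d) ≥ π²/(24 n²) - π⁴/(1920 n⁴)`. -/
theorem zonotope_V1_le_of_circumradius_le_one (d n : ℕ) (hd : 2 ≤ d) (hdn : d ≤ n)
    (p : Fin n → EuclideanSpace ℝ (Fin d))
    (hout : ∃ c : EuclideanSpace ℝ (Fin d),
      (∑ i : Fin n, segment ℝ (0 : EuclideanSpace ℝ (Fin d)) (p i)) ⊆ Metric.closedBall c 1) :
    ∑ i, ‖p i‖ ≤
      (d : ℝ) * (volume (Metric.closedBall (0 : EuclideanSpace ℝ (Fin d)) 1)).toReal /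
          (volume (Metric.closedBall (0 : EuclideanSpace ℝ (Fin (d - 1))) 1)).toReal *
        (1 - Real.pi ^ 2 / (24 * (n : ℝ) ^ 2) + Real.pi ^ 4 / (1920 * (n : ℝ) ^ 4)) := by
  obtain ⟨m, rfl⟩ : ∃ m, d = m + 1 := ⟨d - 1, by omega⟩
  obtain ⟨c, hc⟩ := hout
  change _ ≤ ((m + 1 : ℕ) : ℝ) * _ /
    (volume (Metric.closedBall (0 : EuclideanSpace ℝ (Fin m)) 1)).toReal * _
  have hn : 0 < n := by omega
  have hm : m ≠ 0 := by omega
  have hvol (k : ℕ) : 0 < (volume (Metric.closedBall (0 : EuclideanSpace ℝ (Fin k)) 1)).toReal :=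
    ENNReal.toReal_pos (Metric.measure_closedBall_pos _ _ one_pos).ne'
      measure_closedBall_lt_top.ne
  have hΓ : 0 < Real.Gamma ((m : ℝ) / 2 + 1) := Real.Gamma_pos_of_pos (by positivity)
  have hN := Zonotope.integral_norm_mul_exp_neg_sq (m + 1) m.succ_ne_zero
  rw [show (((m + 1 : ℕ) : ℝ) + 1) / 2 = (m : ℝ) / 2 + 1 by push_cast; ring] at hN
  have hNi : Integrable fun z : EuclideanSpace ℝ (Fin (m + 1)) => ‖z‖ * Real.exp (-‖z‖ ^ 2) := by
    have := hvol (m + 1)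
    exact not_imp_comm.1 integral_undef (by rw [hN]; positivity)
  set e : EuclideanSpace ℝ (Fin (m + 1)) := EuclideanSpace.single 0 1 with he
  have he1 : ‖e‖ = 1 := by simp [he]
  have hG : ∫ z, |inner ℝ e z| * Real.exp (-‖z‖ ^ 2) = _ :=
    (by simp [he, EuclideanSpace.inner_single_left] :
      ∫ z, |inner ℝ e z| * Real.exp (-‖z‖ ^ 2) =
        ∫ z : EuclideanSpace ℝ (Fin (m + 1)), |z 0| * Real.exp (-‖z‖ ^ 2)).trans
      ((Zonotope.integral_abs_coord_mul_exp_neg_sq m).trans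
        (Zonotope.integral_exp_neg_norm_sq m hm))
  have hconst := Zonotope.integral_abs_inner_mul_gaussian
    (Zonotope.integrable_frameMeasure_of_continuous Zonotope.continuous_circlePoint)
    Zonotope.integral_abs_inner_circlePoint_map hNi he1
  have hW : 0 < ∫ ω, ‖Zonotope.circlePoint ω‖
      ∂Zonotope.frameMeasure (EuclideanSpace ℝ (Fin (m + 1))) := by
    refine Zonotope.integral_norm_circlePoint_pos he1 (e₂ := EuclideanSpace.single (Fin.last m) 1)
      (by simp) ?_
    simp [he, EuclideanSpace.inner_single_left, Fin.ext_iff, hm.symm]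
  have hsum := Zonotope.sum_integral_abs_inner_circlePoint_le hn p
    (Zonotope.sum_abs_inner_le_of_zonotope_subset p hc)
  simp_rw [fun i => Zonotope.integral_abs_inner_eq_norm_mul
    Zonotope.integral_abs_inner_circlePoint_map he1 (p i)] at hsum
  rw [← Finset.sum_mul] at hsum
  rw [hN, hG] at hconst
  have hV := hvol m
  have hV' := hvol (m + 1)
  have hx : 0 < Real.pi / (2 * n) := by positivity
  have hsin := Zonotope.sin_le_quintic hx.le
  generalize (volume (Metric.closedBall (0 : EuclideanSpace ℝ (Fin m)) 1)).toReal = V at *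
  generalize (volume (Metric.closedBall (0 : EuclideanSpace ℝ (Fin (m + 1))) 1)).toReal = V' at *
  generalize ∫ ω, ‖Zonotope.circlePoint ω‖
      ∂Zonotope.frameMeasure (EuclideanSpace ℝ (Fin (m + 1))) = W at *
  generalize ∫ ω, |inner ℝ (Zonotope.circlePoint ω) e|
      ∂Zonotope.frameMeasure (EuclideanSpace ℝ (Fin (m + 1))) = I at *
  generalize Real.Gamma ((m : ℝ) / 2 + 1) = γ at *
  have hL : 0 < ((m + 1 : ℕ) : ℝ) * V' / V := by positivity
  have hIL : I * (((m + 1 : ℕ) : ℝ) * V' / V) = 2 * W := by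
    rw [mul_div_assoc', div_eq_iff hV.ne']
    refine mul_right_cancel₀ hΓ.ne' ?_
    linear_combination 2 * hconst
  generalize ((m + 1 : ℕ) : ℝ) * V' / V = L at *
  have hI : 0 < I := pos_of_mul_pos_left (by rw [hIL]; positivity) hL.le
  refine le_of_mul_le_mul_right (hsum.trans ?_) hI
  rw [show W = I * L / 2 by linarith]
  have hn0 : (n : ℝ) ≠ 0 := Nat.cast_ne_zero.2 hn.ne'
  calc _ = Real.sin (Real.pi / (2 * n)) / (Real.pi / (2 * n)) * (I * L) := by
        field_simp
        ring
    _ ≤ (Real.pi / (2 * n) - (Real.pi / (2 * n)) ^ 3 / 6 + (Real.pi / (2 * n)) ^ 5 / 120) /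
        (Real.pi / (2 * n)) * (I * L) := by gcongr
    _ = _ := by
        field_simp
        ring
end
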